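/- Let 1 < p < ∞ and f ∈ L^p(ℝ^d; ℝ^d), and let u(x,t) = (p_t ∗ f)(x) be its Poisson integral. Then there exist constants c₁, c₂ > 0 depending only on d and p such that for every t > 0: c₁ ‖∂_t u(·,t)‖_{L^p(ℝ^d)} ≤ Σ_{j=1}^d ‖∂_{x_j} u(·,t)‖_{L^p(ℝ^d)} ≤ c₂ ‖∂_t u(·,t)‖_{L^p(ℝ^d)}. -/

import Mathlib

open MeasureTheory Filter Set
open scoped ENNReal NNReal Topology

noncomputable section

abbrev Ed (d : ℕ) : Type := EuclideanSpace ℝ (Fin d)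

/-- The surface measure `ω_d` of the unit sphere in `ℝ^{d+1}`. -/
def sphereVol (d : ℕ) : ℝ :=
  ((d : ℝ) + 1) * (volume (Metric.ball (0 : EuclideanSpace ℝ (Fin (d+1))) 1)).toReal

/-- The Poisson kernel `p_t(x)` for the upper half-space `ℝ^d × (0,∞)`. -/
def poissonKernelEd (d : ℕ) (t : ℝ) (x : Ed d) : ℝ :=
  (2 / sphereVol d) * t / (‖x‖ ^ 2 + t ^ 2) ^ (((d : ℝ) + 1) / 2)

/-- The (componentwise) Poisson integral `u(x,t) = (p_t ∗ f)(x)` of a vector field. -/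
def poissonInt (d m : ℕ) (f : Ed d → Ed m) (x : Ed d) (t : ℝ) : Ed m :=
  ∫ y, poissonKernelEd d t y • f (x - y)

/-!
Let `Q_e^s(y) = ⟪e, y⟫ (|y|² + s²)^{-(d+1)/2}` be the conjugate Poisson kernels, and let `u` be the
Poisson integral of `f`. Up to a common dimensional factor, the Cauchy–Riemann equations and the
semigroup law `P_t ⋆ Q_e^s = Q_e^{s+t}` give
`∂_j u(·, s + t) = Q_j^s ⋆ ∂_t u(·, t)` and `∂_t u(·, s + t) = -∑ j, Q_j^s ⋆ ∂_j u(·, t)`.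
Convolution with `Q_e^s` is bounded on `L^p` uniformly in `s`: averaging over lines, with Gaussian
weights so that the dimension disappears, reduces this to the truncated Hilbert kernel
`r / (r² + s²)` on the line. There, for `1 < p ≤ 2`, one integrates the holomorphic function
`(U + iV)^p` over a horizontal line and uses a pointwise inequality between `|V|^p`, `U^p` and
`Re (U + iV)^p`; duality handles `p > 2`. Letting `s → 0`, Fatou's lemma gives both inequalities.
-/

open scoped Convolution
open ContinuousLinearMap (lsmul lsmul_apply)
open Module (finrank)

theorem ennreal_rpow_sub_one_mul_self {p : ℝ} (hp : 1 ≤ p) (x : ℝ≥0∞) :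
    x ^ (p - 1) * x = x ^ p := by
  conv_rhs => rw [← sub_add_cancel p 1,
    ENNReal.rpow_add_of_nonneg _ _ (sub_nonneg.2 hp) zero_le_one, ENNReal.rpow_one]

theorem rpow_lintegral_le {α : Type*} [MeasurableSpace α] {μ : Measure α} {p : ℝ} (hp : 1 ≤ p)
    {f : α → ℝ≥0∞} (hf : AEMeasurable f μ) :
    (∫⁻ a, f a ∂μ) ^ p ≤ μ univ ^ (p - 1) * ∫⁻ a, f a ^ p ∂μ := by
  have hp0 : 0 < p := one_pos.trans_le hp
  have h := eLpNorm'_le_eLpNorm'_mul_rpow_measure_univ one_pos hp hf.aestronglyMeasurable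
  simp only [eLpNorm', enorm_eq_self, ENNReal.rpow_one, div_one] at h
  calc (∫⁻ a, f a ∂μ) ^ p
      ≤ ((∫⁻ a, f a ^ p ∂μ) ^ (1 / p) * μ univ ^ (1 - 1 / p)) ^ p := by gcongr
    _ = μ univ ^ (p - 1) * ∫⁻ a, f a ^ p ∂μ := by
      rw [ENNReal.mul_rpow_of_nonneg _ _ hp0.le, ← ENNReal.rpow_mul, ← ENNReal.rpow_mul,
        one_div_mul_cancel hp0.ne', ENNReal.rpow_one, sub_mul, one_mul,
        one_div_mul_cancel hp0.ne', mul_comm]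

theorem eLpNorm_ofReal_rpow {α F : Type*} [MeasurableSpace α] {μ : Measure α}
    [TopologicalSpace F] [ContinuousENorm F] {p : ℝ} (hp : 0 < p) (f : α → F) :
    eLpNorm f (ENNReal.ofReal p) μ ^ p = ∫⁻ a, ‖f a‖ₑ ^ p ∂μ := by
  rw [eLpNorm_eq_lintegral_rpow_enorm_toReal (by simpa using hp) ENNReal.ofReal_ne_top,
    ENNReal.toReal_ofReal hp.le, ← ENNReal.rpow_mul, one_div_mul_cancel hp.ne', ENNReal.rpow_one]

theorem eLpNorm_ofReal_le_iff {α F : Type*} [MeasurableSpace α] {μ : Measure α}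
    [TopologicalSpace F] [ContinuousENorm F] {p : ℝ} (hp : 0 < p) {f : α → F} {M : ℝ≥0∞} :
    eLpNorm f (ENNReal.ofReal p) μ ≤ M ↔ ∫⁻ a, ‖f a‖ₑ ^ p ∂μ ≤ M ^ p := by
  rw [← eLpNorm_ofReal_rpow hp, ENNReal.rpow_le_rpow_iff hp]

theorem eLpNorm_lintegral_le {α β : Type*} [MeasurableSpace α] [MeasurableSpace β]
    {μ : Measure α} {ν : Measure β} [SFinite μ] [SFinite ν] {p : ℝ} (hp : 1 ≤ p)
    {h : α → β → ℝ≥0∞} (hh : AEMeasurable (Function.uncurry h) (μ.prod ν)) {M : ℝ≥0∞}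
    (hM : ∀ᵐ b ∂ν, eLpNorm (h · b) (ENNReal.ofReal p) μ ≤ M) :
    eLpNorm (fun a => ∫⁻ b, h a b ∂ν) (ENNReal.ofReal p) μ ≤ ν univ * M := by
  have hp0 : 0 < p := one_pos.trans_le hp
  rw [eLpNorm_ofReal_le_iff hp0]
  have hsection : ∀ᵐ a ∂μ, AEMeasurable (h a) ν :=
    hh.aestronglyMeasurable.prodMk_left.mono fun a ha => ha.aemeasurable
  have hpow : AEMeasurable (Function.uncurry fun a b => h a b ^ p) (μ.prod ν) := hh.pow_const p
  calc ∫⁻ a, (∫⁻ b, h a b ∂ν) ^ p ∂μ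
      ≤ ∫⁻ a, ν univ ^ (p - 1) * ∫⁻ b, h a b ^ p ∂ν ∂μ :=
        lintegral_mono_ae (hsection.mono fun a ha => rpow_lintegral_le hp ha)
    _ = ν univ ^ (p - 1) * ∫⁻ b, ∫⁻ a, h a b ^ p ∂μ ∂ν := by
        rw [lintegral_const_mul'' (f := fun a => ∫⁻ b, h a b ^ p ∂ν) _ hpow.lintegral_prod_right',
          lintegral_lintegral_swap hpow]
    _ ≤ ν univ ^ (p - 1) * ∫⁻ _, M ^ p ∂ν := by
        gcongr 1
        exact lintegral_mono_ae (hM.mono fun b hb => (eLpNorm_ofReal_le_iff hp0).1 hb)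
    _ = (ν univ * M) ^ p := by
        rw [lintegral_const, mul_left_comm, ennreal_rpow_sub_one_mul_self hp,
          ENNReal.mul_rpow_of_nonneg _ _ hp0.le, mul_comm]

theorem eLpNorm_integral_smul_le {α β F : Type*} [MeasurableSpace α] [MeasurableSpace β]
    [NormedAddCommGroup F] [NormedSpace ℝ F]
    {μ : Measure α} {ν : Measure β} [SFinite μ] [SFinite ν] {p : ℝ} (hp : 1 ≤ p)
    {w : β → ℝ} (hw : AEStronglyMeasurable w ν)
    {H : α → β → F} (hH : AEStronglyMeasurable (Function.uncurry H) (μ.prod ν)) {M : ℝ≥0∞}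
    (hM : ∀ᵐ b ∂ν, eLpNorm (H · b) (ENNReal.ofReal p) μ ≤ M) :
    eLpNorm (fun a => ∫ b, w b • H a b ∂ν) (ENNReal.ofReal p) μ ≤ (∫⁻ b, ‖w b‖ₑ ∂ν) * M := by
  set ρ := ν.withDensity fun b => ‖w b‖ₑ with hρ
  have hρν : ρ ≪ ν := withDensity_absolutelyContinuous _ _
  have hρ_univ : ρ univ = ∫⁻ b, ‖w b‖ₑ ∂ν := by
    rw [hρ, withDensity_apply _ .univ, setLIntegral_univ]
  have hpt : ∀ᵐ a ∂μ, ‖∫ b, w b • H a b ∂ν‖ₑ ≤ ‖∫⁻ b, ‖H a b‖ₑ ∂ρ‖ₑ := by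
    filter_upwards [hH.prodMk_left] with a (ha : AEStronglyMeasurable (H a) ν)
    rw [enorm_eq_self, hρ, lintegral_withDensity_eq_lintegral_mul₀ hw.enorm ha.enorm]
    exact (enorm_integral_le_lintegral_enorm _).trans_eq (by simp only [enorm_smul, Pi.mul_apply])
  refine (eLpNorm_mono_enorm_ae hpt).trans ?_
  rw [← hρ_univ]
  refine eLpNorm_lintegral_le hp ?_ ?_
  · exact hH.enorm.mono_ac (Measure.AbsolutelyContinuous.rfl.prod hρν)
  · exact hρν.ae_le (hM.mono fun b hb => (eLpNorm_enorm _).trans_le hb)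

theorem eLpNorm_convolution_le {G F : Type*} [AddGroup G] [MeasurableSpace G] [MeasurableAdd₂ G]
    [MeasurableNeg G] [NormedAddCommGroup F] [NormedSpace ℝ F] {μ : Measure G} [SFinite μ]
    [μ.IsAddRightInvariant] {p : ℝ} (hp : 1 ≤ p) {k : G → ℝ} {g : G → F}
    (hk : AEStronglyMeasurable k μ) (hg : AEStronglyMeasurable g μ) :
    eLpNorm (k ⋆[lsmul ℝ ℝ, μ] g) (ENNReal.ofReal p) μ ≤
      (∫⁻ y, ‖k y‖ₑ ∂μ) * eLpNorm g (ENNReal.ofReal p) μ := by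
  refine eLpNorm_integral_smul_le (H := fun x y => g (x - y)) hp hk ?_ (.of_forall fun y => ?_)
  · exact hg.comp_quasiMeasurePreserving (quasiMeasurePreserving_sub_of_right_invariant μ μ)
  · exact (eLpNorm_comp_measurePreserving hg (measurePreserving_sub_right μ y)).le

theorem enorm_abs_rpow_sub_two_mul_rpow {p q : ℝ} (hpq : p.HolderConjugate q) (x : ℝ) :
    ‖|x| ^ (p - 2) * x‖ₑ ^ q = ‖x‖ₑ ^ p := by
  have hnorm : ‖|x| ^ (p - 2) * x‖ = |x| ^ (p - 1) := by
    rw [norm_mul, Real.norm_eq_abs, Real.norm_eq_abs, abs_of_nonneg (by positivity)]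
    rcases eq_or_ne x 0 with rfl | hx
    · simp [hpq.sub_one_ne_zero]
    · rw [← Real.rpow_add_one (abs_ne_zero.2 hx)]
      ring_nf
  rw [← ofReal_norm, ← ofReal_norm, hnorm, ENNReal.ofReal_rpow_of_nonneg (by positivity)
    hpq.symm.nonneg, ENNReal.ofReal_rpow_of_nonneg (norm_nonneg _) hpq.nonneg,
    ← Real.rpow_mul (abs_nonneg x), hpq.sub_one_mul_conj, Real.norm_eq_abs]

theorem mul_abs_rpow_sub_two_mul {p : ℝ} (hp : 1 < p) (x : ℝ) :
    x * (|x| ^ (p - 2) * x) = |x| ^ p := by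
  rcases eq_or_ne x 0 with rfl | hx
  · simp [(one_pos.trans hp).ne']
  · rw [mul_left_comm, ← abs_mul_abs_self, ← sq, ← Real.rpow_natCast,
      ← Real.rpow_add (abs_pos.2 hx)]
    norm_num

theorem eLpNorm_le_of_forall_enorm_integral_mul_le {α : Type*} [MeasurableSpace α] {μ : Measure α}
    {p q : ℝ} (hpq : p.HolderConjugate q) {h : α → ℝ} (hh : MemLp h (ENNReal.ofReal p) μ)
    {M : ℝ≥0∞} (hM : ∀ φ : α → ℝ, MemLp φ (ENNReal.ofReal q) μ →
      ‖∫ a, h a * φ a ∂μ‖ₑ ≤ M * eLpNorm φ (ENNReal.ofReal q) μ) :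
    eLpNorm h (ENNReal.ofReal p) μ ≤ M := by
  set N := eLpNorm h (ENNReal.ofReal p) μ with hN
  have hN_top : N ≠ ∞ := hh.eLpNorm_lt_top.ne
  set φ : α → ℝ := fun a => |h a| ^ (p - 2) * h a with hφ
  have hφ_norm : eLpNorm φ (ENNReal.ofReal q) μ = N ^ (p - 1) := by
    refine ENNReal.rpow_left_injective hpq.symm.pos.ne' ?_
    simp only [eLpNorm_ofReal_rpow hpq.symm.pos, hφ, enorm_abs_rpow_sub_two_mul_rpow hpq,
      ← ENNReal.rpow_mul, hpq.sub_one_mul_conj, hN, eLpNorm_ofReal_rpow hpq.pos]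
  have hφ_memLp : MemLp φ (ENNReal.ofReal q) μ := by
    have hψ : Measurable fun x : ℝ => |x| ^ (p - 2) * x := by fun_prop
    refine ⟨(hψ.comp_aemeasurable hh.aemeasurable).aestronglyMeasurable, ?_⟩
    rw [hφ_norm]
    exact ENNReal.rpow_lt_top_of_nonneg hpq.sub_one_pos.le hN_top
  have hpair : ‖∫ a, h a * φ a ∂μ‖ₑ = N ^ p := by
    have hint := hh.integrable_norm_rpow (by simpa using hpq.pos) ENNReal.ofReal_ne_top
    rw [ENNReal.toReal_ofReal hpq.nonneg] at hint
    simp only [hφ, mul_abs_rpow_sub_two_mul hpq.lt]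
    simp only [← Real.norm_eq_abs]
    rw [Real.enorm_of_nonneg (integral_nonneg fun a => by positivity),
      ofReal_integral_eq_lintegral_ofReal hint (.of_forall fun a => by positivity), hN,
      eLpNorm_ofReal_rpow hpq.pos]
    exact lintegral_congr fun a => by
      rw [← ofReal_norm, ENNReal.ofReal_rpow_of_nonneg (norm_nonneg _) hpq.nonneg]
  have hle : N ^ (p - 1) * N ≤ N ^ (p - 1) * M := by
    rw [ennreal_rpow_sub_one_mul_self hpq.lt.le, ← hpair, ← hφ_norm, mul_comm _ M]
    exact hM φ hφ_memLp
  rcases eq_or_ne N 0 with h0 | h0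
  · simp [h0]
  · exact (ENNReal.mul_le_mul_iff_right (by simp [h0, hN_top]) (by simp [h0, hN_top])).1 hle

theorem convolution_sub_apply {G : Type*} [Sub G] [MeasurableSpace G] {μ : Measure G}
    {k g h : G → ℝ} {x : G} (hg : ConvolutionExistsAt k g x (lsmul ℝ ℝ) μ)
    (hh : ConvolutionExistsAt k h x (lsmul ℝ ℝ) μ) :
    (k ⋆[lsmul ℝ ℝ, μ] (g - h)) x =
      (k ⋆[lsmul ℝ ℝ, μ] g) x - (k ⋆[lsmul ℝ ℝ, μ] h) x := by
  simp only [convolution_def, Pi.sub_apply, map_sub, integral_sub hg hh]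

section Convolution

variable {E : Type*} [NormedAddCommGroup E] [NormedSpace ℝ E] [FiniteDimensional ℝ E]
  [MeasureSpace E] [BorelSpace E] [(volume : Measure E).IsAddHaarMeasure]

/-- Convolution with the kernel `k` is bounded on `L^p` with constant `C`. For real exponents
`1 < p < ∞` only; the convolution integral need not converge for kernels `k ∉ L^q`. -/
def ConvolutionBound (k : E → ℝ) (p : ℝ) (C : ℝ≥0) : Prop :=
  ∀ g : E → ℝ, MemLp g (ENNReal.ofReal p) → eLpNorm (k ⋆ g) (ENNReal.ofReal p) volume ≤
    C * eLpNorm g (ENNReal.ofReal p) volume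

variable {F : Type*} [NormedAddCommGroup F] {f : E → F} {r : ℝ≥0∞}

theorem memLp_comp_const_sub (hf : MemLp f r) (x : E) : MemLp (fun y => f (x - y)) r :=
  hf.comp_measurePreserving (Measure.measurePreserving_sub_left volume x)

theorem eLpNorm_comp_const_sub (hf : AEStronglyMeasurable f) (x : E) :
    eLpNorm (fun y => f (x - y)) r volume = eLpNorm f r volume :=
  eLpNorm_comp_measurePreserving hf (Measure.measurePreserving_sub_left volume x)

variable [NormedSpace ℝ F] {k g : E → ℝ} {p q : ℝ} {C : ℝ≥0}

theorem aestronglyMeasurable_convolution (hk : AEStronglyMeasurable k)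
    (hf : AEStronglyMeasurable f) : AEStronglyMeasurable (k ⋆ f) :=
  (hk.convolution_integrand (lsmul ℝ ℝ) hf).integral_prod_right'

theorem convolution_real_comm (k g : E → ℝ) : k ⋆ g = g ⋆ k := by
  ext x
  rw [convolution_lsmul_swap]
  simp only [smul_eq_mul, mul_comm, convolution_def, lsmul_apply]

theorem memLp_convolution_of_integrable (hp : 1 ≤ p) (hk : Integrable k)
    (hf : MemLp f (ENNReal.ofReal p)) : MemLp (k ⋆ f) (ENNReal.ofReal p) :=
  ⟨aestronglyMeasurable_convolution hk.1 hf.1, (eLpNorm_convolution_le hp hk.1 hf.1).trans_lt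
    (ENNReal.mul_lt_top hk.2 hf.eLpNorm_lt_top)⟩

theorem convolutionExistsAt_of_memLp (hpq : p.HolderConjugate q) (hk : MemLp k (ENNReal.ofReal q))
    (hf : MemLp f (ENNReal.ofReal p)) (x : E) : ConvolutionExistsAt k f x (lsmul ℝ ℝ) := by
  have := hpq.symm.ennrealOfReal
  exact memLp_one_iff_integrable.1 ((memLp_comp_const_sub hf x).smul hk)

theorem enorm_convolution_le (hpq : p.HolderConjugate q) (hk : MemLp k (ENNReal.ofReal q))
    (hg : MemLp g (ENNReal.ofReal p)) (x : E) :
    ‖(k ⋆ g) x‖ₑ ≤ eLpNorm k (ENNReal.ofReal q) volume * eLpNorm g (ENNReal.ofReal p) volume := by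
  have := hpq.symm.ennrealOfReal
  have hgx := memLp_comp_const_sub hg x
  calc ‖(k ⋆ g) x‖ₑ ≤ eLpNorm (k • fun y => g (x - y)) 1 volume := by
        rw [eLpNorm_one_eq_lintegral_enorm]
        exact enorm_integral_le_lintegral_enorm _
    _ ≤ eLpNorm k (ENNReal.ofReal q) volume *
          eLpNorm (fun y => g (x - y)) (ENNReal.ofReal p) volume :=
        eLpNorm_smul_le_mul_eLpNorm hgx.1 hk.1
    _ = _ := by rw [eLpNorm_comp_const_sub hg.1]

theorem tendsto_convolution_of_tendsto_eLpNorm_sub (hpq : p.HolderConjugate q)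
    (hk : MemLp k (ENNReal.ofReal q)) (hg : MemLp g (ENNReal.ofReal p)) {ι : Type*} {l : Filter ι}
    {φ : ι → E → ℝ} (hφ : ∀ i, MemLp (φ i) (ENNReal.ofReal p))
    (h : Tendsto (fun i => eLpNorm (g - φ i) (ENNReal.ofReal p) volume) l (𝓝 0)) (x : E) :
    Tendsto (fun i => (k ⋆ φ i) x) l (𝓝 ((k ⋆ g) x)) := by
  have hbound (i : ι) : edist ((k ⋆ φ i) x) ((k ⋆ g) x) ≤
      eLpNorm k (ENNReal.ofReal q) volume * eLpNorm (g - φ i) (ENNReal.ofReal p) volume := by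
    rw [edist_comm, edist_eq_enorm_sub,
      ← convolution_sub_apply (convolutionExistsAt_of_memLp hpq hk hg x)
        (convolutionExistsAt_of_memLp hpq hk (hφ i) x)]
    exact enorm_convolution_le hpq hk (hg.sub (hφ i)) x
  have hzero := ENNReal.Tendsto.const_mul h (.inr hk.eLpNorm_lt_top.ne)
  rw [mul_zero] at hzero
  exact tendsto_iff_edist_tendsto_0.2
    (tendsto_of_tendsto_of_tendsto_of_le_of_le tendsto_const_nhds hzero (fun _ => zero_le) hbound)

theorem ConvolutionBound.of_hasCompactSupport (hpq : p.HolderConjugate q)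
    (hk : MemLp k (ENNReal.ofReal q))
    (h : ∀ g : E → ℝ, Continuous g → HasCompactSupport g →
      eLpNorm (k ⋆ g) (ENNReal.ofReal p) volume ≤ C * eLpNorm g (ENNReal.ofReal p) volume) :
    ConvolutionBound k p C := by
  intro g hg
  obtain ⟨ε, -, hε_pos, hε⟩ := exists_seq_strictAnti_tendsto' (zero_lt_one (α := ℝ≥0∞))
  choose φ hφ_supp hφ_sub hφ_cont hφ_mem using fun n =>
    hg.exists_hasCompactSupport_eLpNorm_sub_le ENNReal.ofReal_ne_top (hε_pos n).1.ne'
  have hlim : ∀ x, Tendsto (fun n => (k ⋆ φ n) x) atTop (𝓝 ((k ⋆ g) x)) :=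
    tendsto_convolution_of_tendsto_eLpNorm_sub hpq hk hg hφ_mem
      (tendsto_of_tendsto_of_tendsto_of_le_of_le tendsto_const_nhds hε (fun _ => zero_le) hφ_sub)
  have hφ_norm : ∀ n, eLpNorm (k ⋆ φ n) (ENNReal.ofReal p) volume ≤
      C * (eLpNorm g (ENNReal.ofReal p) volume + ε n) := by
    intro n
    refine (h _ (hφ_cont n) (hφ_supp n)).trans ?_
    gcongr
    calc eLpNorm (φ n) (ENNReal.ofReal p) volume
        ≤ eLpNorm g (ENNReal.ofReal p) volume + eLpNorm (g - φ n) (ENNReal.ofReal p) volume := by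
          conv_lhs => rw [← sub_sub_cancel g (φ n)]
          exact eLpNorm_sub_le hg.1 (hg.1.sub (hφ_mem n).1) (by simpa using hpq.lt.le)
      _ ≤ _ := by gcongr; exact hφ_sub n
  have hC : Tendsto (fun n => C * (eLpNorm g (ENNReal.ofReal p) volume + ε n)) atTop
      (𝓝 (C * eLpNorm g (ENNReal.ofReal p) volume)) := by
    simpa using ENNReal.Tendsto.const_mul (hε.const_add (eLpNorm g (ENNReal.ofReal p) volume))
      (.inr ENNReal.coe_ne_top)
  calc eLpNorm (k ⋆ g) (ENNReal.ofReal p) volume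
      ≤ liminf (fun n => eLpNorm (k ⋆ φ n) (ENNReal.ofReal p) volume) atTop :=
        Lp.eLpNorm_lim_le_liminf_eLpNorm
          (fun n => aestronglyMeasurable_convolution hk.1 (hφ_mem n).1) _ (.of_forall hlim)
    _ ≤ liminf (fun n => C * (eLpNorm g (ENNReal.ofReal p) volume + ε n)) atTop :=
        liminf_le_liminf (.of_forall hφ_norm)
    _ = C * eLpNorm g (ENNReal.ofReal p) volume := hC.liminf_eq

theorem integrable_prod_mul_mul_sub (hpq : p.HolderConjugate q) (hk : MemLp k (ENNReal.ofReal p))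
    {φ : E → ℝ} (hφ : MemLp φ (ENNReal.ofReal q)) {f : E → ℝ} (hf : Integrable f) :
    Integrable (fun z : E × E => φ z.1 * (k (z.1 - z.2) * f z.2)) (volume.prod volume) := by
  have := hpq.ennrealOfReal
  have hmeas : AEStronglyMeasurable (fun z : E × E => φ z.1 * (k (z.1 - z.2) * f z.2))
      (volume.prod volume) :=
    hφ.1.comp_fst.mul ((hk.1.comp_quasiMeasurePreserving
      (quasiMeasurePreserving_sub_of_right_invariant volume volume)).mul hf.1.comp_snd)
  refine ⟨hmeas, ?_⟩
  have hinner : ∀ y, ∫⁻ x, ‖φ x * (k (x - y) * f y)‖ₑ ≤ eLpNorm k (ENNReal.ofReal p) volume *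
      eLpNorm φ (ENNReal.ofReal q) volume * ‖f y‖ₑ := by
    intro y
    calc ∫⁻ x, ‖φ x * (k (x - y) * f y)‖ₑ
        = eLpNorm ((fun x => k (x - y)) • φ) 1 volume * ‖f y‖ₑ := by
          rw [eLpNorm_one_eq_lintegral_enorm, ← lintegral_mul_const' _ _ enorm_ne_top]
          simp only [Pi.smul_apply', smul_eq_mul, enorm_mul]
          exact lintegral_congr fun x => by ring
      _ ≤ eLpNorm (fun x => k (x - y)) (ENNReal.ofReal p) volume *
            eLpNorm φ (ENNReal.ofReal q) volume * ‖f y‖ₑ := by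
          gcongr
          exact eLpNorm_smul_le_mul_eLpNorm hφ.1
            (hk.1.comp_measurePreserving (measurePreserving_sub_right volume y))
      _ = _ := by
          rw [← eLpNorm_comp_measurePreserving hk.1 (measurePreserving_sub_right volume y)]
          rfl
  calc ∫⁻ z, ‖φ z.1 * (k (z.1 - z.2) * f z.2)‖ₑ ∂volume.prod volume
      = ∫⁻ y, ∫⁻ x, ‖φ x * (k (x - y) * f y)‖ₑ := lintegral_prod_symm _ hmeas.enorm
    _ ≤ ∫⁻ y, eLpNorm k (ENNReal.ofReal p) volume * eLpNorm φ (ENNReal.ofReal q) volume *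
          ‖f y‖ₑ := lintegral_mono hinner
    _ < ∞ := by
        have htop := ENNReal.mul_lt_top hk.eLpNorm_lt_top hφ.eLpNorm_lt_top
        rw [lintegral_const_mul' _ _ htop.ne]
        exact ENNReal.mul_lt_top htop hf.2

theorem integral_convolution_mul_of_odd (hpq : p.HolderConjugate q)
    (hk : MemLp k (ENNReal.ofReal p)) (hodd : Function.Odd k)
    {φ : E → ℝ} (hφ : MemLp φ (ENNReal.ofReal q)) {f : E → ℝ} (hf : Integrable f) :
    ∫ x, (k ⋆ f) x * φ x = -∫ x, f x * (k ⋆ φ) x := by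
  calc ∫ x, (k ⋆ f) x * φ x = ∫ x, ∫ y, φ x * (k (x - y) * f y) := by
        simp only [convolution_lsmul_swap, smul_eq_mul, integral_const_mul, mul_comm]
    _ = ∫ y, ∫ x, φ x * (k (x - y) * f y) :=
        integral_integral_swap (integrable_prod_mul_mul_sub hpq hk hφ hf)
    _ = ∫ y, -(f y * ∫ x, k (y - x) * φ x) := by
        refine integral_congr_ae (.of_forall fun y => ?_)
        simp only [← integral_const_mul, ← integral_neg, ← neg_sub _ y, hodd _]
        exact integral_congr_ae (.of_forall fun x => by ring)
    _ = -∫ x, f x * (k ⋆ φ) x := by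
        simp only [integral_neg, convolution_lsmul_swap, smul_eq_mul]

theorem ConvolutionBound.of_holderConjugate (hpq : p.HolderConjugate q)
    (hkp : MemLp k (ENNReal.ofReal p)) (hkq : MemLp k (ENNReal.ofReal q)) (hodd : Function.Odd k)
    (hk : ConvolutionBound k q C) : ConvolutionBound k p C := by
  have := hpq.ennrealOfReal
  refine .of_hasCompactSupport hpq hkq fun f hf hf_supp => ?_
  have hf_int : Integrable f := hf.integrable_of_hasCompactSupport hf_supp
  have hfp : MemLp f (ENNReal.ofReal p) := hf.memLp_of_hasCompactSupport hf_supp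
  have hh : MemLp (k ⋆ f) (ENNReal.ofReal p) := by
    rw [convolution_real_comm]
    exact memLp_convolution_of_integrable hpq.lt.le hf_int hkp
  refine eLpNorm_le_of_forall_enorm_integral_mul_le hpq hh fun φ hφ => ?_
  rw [integral_convolution_mul_of_odd hpq hkp hodd hφ hf_int, enorm_neg]
  calc ‖∫ x, f x * (k ⋆ φ) x‖ₑ ≤ eLpNorm (f • (k ⋆ φ)) 1 volume := by
        rw [eLpNorm_one_eq_lintegral_enorm]
        exact enorm_integral_le_lintegral_enorm _
    _ ≤ eLpNorm f (ENNReal.ofReal p) volume * eLpNorm (k ⋆ φ) (ENNReal.ofReal q) volume :=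
        eLpNorm_smul_le_mul_eLpNorm (aestronglyMeasurable_convolution hkq.1 hφ.1) hfp.1
    _ ≤ eLpNorm f (ENNReal.ofReal p) volume * (C * eLpNorm φ (ENNReal.ofReal q) volume) := by
        gcongr
        exact hk φ hφ
    _ = _ := by ring

end Convolution

theorem exists_one_le_mul_cos_rpow_sub {p : ℝ} (hp : 1 < p) (hp2 : p ≤ 2) :
    ∃ A B : ℝ, 0 ≤ A ∧ ∀ a, 0 ≤ a → a < Real.pi / 2 →
      1 ≤ A * Real.cos a ^ p - B * Real.cos (p * a) := by
  have hpi := Real.pi_pos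
  obtain ⟨θ, hθ, hθ2⟩ : ∃ θ, Real.pi / 2 / p < θ ∧ θ < Real.pi / 2 :=
    exists_between (div_lt_self (by positivity) hp)
  have hpθ : Real.pi / 2 < p * θ := (div_lt_iff₀' (by positivity)).1 hθ
  have hcosθ : 0 < Real.cos θ := Real.cos_pos_of_mem_Ioo ⟨by nlinarith, hθ2⟩
  set b := -Real.cos (p * θ) with hb
  have hb_pos : 0 < b :=
    neg_pos.2 (Real.cos_neg_of_pi_div_two_lt_of_lt hpθ (by nlinarith))
  refine ⟨(1 + 1 / b) / Real.cos θ ^ p, 1 / b, by positivity, fun a ha ha2 => ?_⟩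
  have hcosa : 0 < Real.cos a := Real.cos_pos_of_mem_Ioo ⟨by linarith, ha2⟩
  rcases le_total θ a with hθa | haθ
  · have hcos : Real.cos (p * a) ≤ -b := by
      rw [hb, neg_neg]
      exact Real.cos_le_cos_of_nonneg_of_le_pi (by nlinarith) (by nlinarith) (by gcongr)
    have hB : 1 / b * Real.cos (p * a) ≤ 1 / b * -b := by gcongr
    have hA : 0 ≤ (1 + 1 / b) / Real.cos θ ^ p * Real.cos a ^ p := by positivity
    have hb1 : 1 / b * -b = -1 := by field_simp
    linarith
  · have hcos : Real.cos θ ≤ Real.cos a :=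
      Real.cos_le_cos_of_nonneg_of_le_pi ha (by linarith) haθ
    have hA : 1 + 1 / b ≤ (1 + 1 / b) / Real.cos θ ^ p * Real.cos a ^ p := by
      rw [div_mul_eq_mul_div, le_div_iff₀ (by positivity)]
      gcongr
    have hB : 1 / b * Real.cos (p * a) ≤ 1 / b * 1 := by
      gcongr
      exact Real.cos_le_one _
    linarith

theorem exists_norm_rpow_le_re_rpow_sub_re_cpow {p : ℝ} (hp : 1 < p) (hp2 : p ≤ 2) :
    ∃ A B : ℝ, 0 ≤ A ∧ ∀ w : ℂ, 0 < w.re →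
      ‖w‖ ^ p ≤ A * w.re ^ p - B * (w ^ (p : ℂ)).re := by
  obtain ⟨A, B, hA, hAB⟩ := exists_one_le_mul_cos_rpow_sub hp hp2
  have hp0 : 0 < p := one_pos.trans hp
  refine ⟨A, B, hA, fun w hw => ?_⟩
  have harg : |w.arg| < Real.pi / 2 := Complex.abs_arg_lt_pi_div_two_iff.2 (.inl hw)
  have hre : w.re = ‖w‖ * Real.cos |w.arg| := by rw [Real.cos_abs, Complex.norm_mul_cos_arg]
  have hpow : (w ^ (p : ℂ)).re = ‖w‖ ^ p * Real.cos (p * |w.arg|) := by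
    rw [Complex.cpow_ofReal_re, ← Real.cos_abs (w.arg * p), abs_mul, abs_of_pos hp0,
      mul_comm _ p]
  have hcos : 0 ≤ Real.cos |w.arg| :=
    (Real.cos_pos_of_mem_Ioo ⟨by linarith [abs_nonneg w.arg, Real.pi_pos], harg⟩).le
  calc ‖w‖ ^ p = ‖w‖ ^ p * 1 := (mul_one _).symm
    _ ≤ ‖w‖ ^ p * (A * Real.cos |w.arg| ^ p - B * Real.cos (p * |w.arg|)) := by
        gcongr
        exact hAB _ (abs_nonneg _) harg
    _ = A * w.re ^ p - B * (w ^ (p : ℂ)).re := by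
        rw [hpow, hre, Real.mul_rpow (norm_nonneg _) hcos]
        ring

theorem memLp_one_add_norm_rpow {E : Type*} [NormedAddCommGroup E] [NormedSpace ℝ E]
    [FiniteDimensional ℝ E] [MeasurableSpace E] [BorelSpace E] {μ : Measure E} [μ.IsAddHaarMeasure]
    {a q : ℝ} (hq : 0 < q) (ha : Module.finrank ℝ E < a * q) :
    MemLp (fun y : E => (1 + ‖y‖) ^ (-a)) (ENNReal.ofReal q) μ := by
  have hmeas : AEStronglyMeasurable (fun y : E => (1 + ‖y‖) ^ (-a)) μ :=
    Measurable.aestronglyMeasurable (by fun_prop)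
  rw [← integrable_norm_rpow_iff hmeas (by simpa using hq) ENNReal.ofReal_ne_top]
  refine (integrable_one_add_norm ha).congr (.of_forall fun y => ?_)
  dsimp only
  rw [Real.norm_of_nonneg (by positivity), ENNReal.toReal_ofReal hq.le, ← neg_mul,
    Real.rpow_mul (by positivity)]

theorem memLp_of_norm_le_mul_rpow {E F : Type*} [NormedAddCommGroup E] [NormedSpace ℝ E]
    [FiniteDimensional ℝ E] [MeasurableSpace E] [BorelSpace E] {μ : Measure E} [μ.IsAddHaarMeasure]
    [NormedAddCommGroup F] {φ : E → F} {C a q : ℝ} (hq : 0 < q) (ha : Module.finrank ℝ E < a * q)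
    (hφ : AEStronglyMeasurable φ μ) (h : ∀ y, ‖φ y‖ ≤ C * (1 + ‖y‖) ^ (-a)) :
    MemLp φ (ENNReal.ofReal q) μ :=
  (memLp_one_add_norm_rpow hq ha).of_le_mul hφ <| .of_forall fun y => by
    simpa only [Real.norm_of_nonneg (by positivity : 0 ≤ (1 + ‖y‖) ^ (-a))] using h y

theorem integrable_norm_rpow_of_memLp {α F : Type*} [MeasurableSpace α] {μ : Measure α}
    [NormedAddCommGroup F] {p : ℝ} (hp : 0 < p) {f : α → F} (hf : MemLp f (ENNReal.ofReal p) μ) :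
    Integrable (fun a => ‖f a‖ ^ p) μ := by
  simpa only [ENNReal.toReal_ofReal hp.le] using
    hf.integrable_norm_rpow (by simpa using hp) ENNReal.ofReal_ne_top

theorem integrable_cpow_of_memLp {α : Type*} [MeasurableSpace α] {μ : Measure α} {p : ℝ}
    (hp : 0 < p) {F : α → ℂ} (hF : MemLp F (ENNReal.ofReal p) μ) :
    Integrable (fun a => F a ^ (p : ℂ)) μ :=
  (integrable_norm_rpow_of_memLp hp hF).mono' (hF.1.aemeasurable.pow_const _).aestronglyMeasurable
    (.of_forall fun _ => (Complex.norm_cpow_real _ _).le)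

theorem exists_eLpNorm_le_mul_eLpNorm_re {α : Type*} [MeasurableSpace α] {μ : Measure α} {p : ℝ}
    (hp : 1 < p) (hp2 : p ≤ 2) : ∃ C : ℝ≥0, ∀ F : α → ℂ, MemLp F (ENNReal.ofReal p) μ →
      (∀ a, 0 < (F a).re) → ∫ a, F a ^ (p : ℂ) ∂μ = 0 →
      eLpNorm F (ENNReal.ofReal p) μ ≤ C * eLpNorm (fun a => (F a).re) (ENNReal.ofReal p) μ := by
  obtain ⟨A, B, hA, hAB⟩ := exists_norm_rpow_le_re_rpow_sub_re_cpow hp hp2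
  have hp0 : 0 < p := one_pos.trans hp
  refine ⟨A.toNNReal ^ (1 / p), fun F hF hpos hzero => ?_⟩
  have hnorm : Integrable (fun a => ‖F a‖ ^ p) μ := integrable_norm_rpow_of_memLp hp0 hF
  have hre : Integrable (fun a => (F a).re ^ p) μ := by
    simpa only [Function.comp_apply, Complex.reCLM_apply, Real.norm_eq_abs, abs_of_pos (hpos _)]
      using integrable_norm_rpow_of_memLp hp0 (Complex.reCLM.comp_memLp' hF)
  have hcpow : Integrable (fun a => F a ^ (p : ℂ)) μ := integrable_cpow_of_memLp hp0 hF
  have hcpow_re : Integrable (fun a => (F a ^ (p : ℂ)).re) μ := Complex.reCLM.integrable_comp hcpow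
  have hcpow_re_zero : ∫ a, (F a ^ (p : ℂ)).re ∂μ = 0 := by
    simpa [hzero] using Complex.reCLM.integral_comp_comm hcpow
  have hint : ∫ a, ‖F a‖ ^ p ∂μ ≤ A * ∫ a, (F a).re ^ p ∂μ := calc
    ∫ a, ‖F a‖ ^ p ∂μ ≤ ∫ a, (A * (F a).re ^ p - B * (F a ^ (p : ℂ)).re) ∂μ :=
        integral_mono hnorm ((hre.const_mul A).sub (hcpow_re.const_mul B))
          fun a => hAB _ (hpos a)
    _ = A * ∫ a, (F a).re ^ p ∂μ := by
        rw [integral_sub (hre.const_mul A) (hcpow_re.const_mul B), integral_const_mul,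
          integral_const_mul, hcpow_re_zero, mul_zero, sub_zero]
  have hpow : eLpNorm F (ENNReal.ofReal p) μ ^ p ≤
      ENNReal.ofReal A * eLpNorm (fun a => (F a).re) (ENNReal.ofReal p) μ ^ p := by
    rw [eLpNorm_ofReal_rpow hp0, eLpNorm_ofReal_rpow hp0]
    calc ∫⁻ a, ‖F a‖ₑ ^ p ∂μ = ENNReal.ofReal (∫ a, ‖F a‖ ^ p ∂μ) := by
          rw [ofReal_integral_eq_lintegral_ofReal hnorm (.of_forall fun a => by positivity)]
          simp only [← ENNReal.ofReal_rpow_of_nonneg (norm_nonneg _) hp0.le, ofReal_norm]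
      _ ≤ ENNReal.ofReal (A * ∫ a, (F a).re ^ p ∂μ) := ENNReal.ofReal_le_ofReal hint
      _ = ENNReal.ofReal A * ∫⁻ a, ‖(F a).re‖ₑ ^ p ∂μ := by
          rw [ENNReal.ofReal_mul hA, ofReal_integral_eq_lintegral_ofReal hre
            (.of_forall fun a => Real.rpow_nonneg (hpos a).le _)]
          simp only [← ENNReal.ofReal_rpow_of_nonneg (hpos _).le hp0.le,
            Real.enorm_of_nonneg (hpos _).le]
  rw [← ENNReal.rpow_le_rpow_iff hp0, ENNReal.mul_rpow_of_nonneg _ _ hp0.le,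
    ← ENNReal.coe_rpow_of_nonneg _ hp0.le, ← NNReal.rpow_mul, one_div_mul_cancel hp0.ne',
    NNReal.rpow_one]
  exact hpow

theorem norm_intervalIntegral_le_of_forall_mem_uIcc {f : ℝ → ℂ} {a b C : ℝ}
    (h : ∀ x ∈ uIcc a b, ‖f x‖ ≤ C) : ‖∫ x in a..b, f x‖ ≤ C * |b - a| :=
  intervalIntegral.norm_integral_le_of_norm_le_const fun x hx => h x (uIoc_subset_uIcc hx)

theorem intervalIntegral_horizontal_eq {Φ : ℂ → ℂ} {η R : ℝ} (hR : 0 ≤ R)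
    (hΦ : DifferentiableOn ℂ Φ {z | η ≤ z.im}) :
    ∫ s in (-R)..R, Φ (s + η * Complex.I) =
      (∫ s in (-R)..R, Φ (s + (η + R : ℝ) * Complex.I)) -
        Complex.I • (∫ v in η..(η + R), Φ ((R : ℝ) + v * Complex.I)) +
        Complex.I • (∫ v in η..(η + R), Φ ((-R : ℂ) + v * Complex.I)) := by
  have hηR : uIcc η (η + R) = Icc η (η + R) := uIcc_of_le (by linarith)
  have hrect := Complex.integral_boundary_rect_eq_zero_of_differentiableOn Φ
    (-R + η * Complex.I) (R + (η + R : ℝ) * Complex.I) (hΦ.mono fun z hz => by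
      have := hz.2
      simp only [mem_preimage, Complex.add_im, Complex.neg_im, Complex.ofReal_im, neg_zero,
        Complex.mul_im, Complex.ofReal_re, Complex.I_im, mul_one, Complex.I_re, mul_zero, add_zero,
        zero_add, hηR] at this
      exact this.1)
  simp only [Complex.add_re, Complex.neg_re, Complex.ofReal_re, Complex.mul_re, Complex.I_re,
    mul_zero, Complex.ofReal_im, Complex.I_im, mul_one, sub_self, add_zero, Complex.add_im,
    Complex.neg_im, neg_zero, Complex.mul_im, zero_add, Complex.ofReal_neg] at hrect
  linear_combination hrect

theorem norm_integral_horizontal_le {Φ : ℂ → ℂ} {C p η : ℝ} (hC : 0 ≤ C) (hp : 0 ≤ p)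
    (hη : 0 ≤ η) (hΦ : DifferentiableOn ℂ Φ {z | η ≤ z.im})
    (hΦC : ∀ z : ℂ, η ≤ z.im → ‖Φ z‖ ≤ C * (1 + ‖z‖) ^ (-p)) {R : ℝ} (hR : 0 < R) :
    ‖∫ s in (-R)..R, Φ (s + η * Complex.I)‖ ≤ 4 * C * R ^ (-(p - 1)) := by
  have hbound : ∀ z : ℂ, η ≤ z.im → R ≤ |z.re| ∨ R ≤ |z.im| → ‖Φ z‖ ≤ C * R ^ (-p) := by
    intro z hz hRz
    have hRz : R ≤ 1 + ‖z‖ := by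
      rcases hRz with h | h <;> linarith [Complex.abs_re_le_norm z, Complex.abs_im_le_norm z]
    refine (hΦC z hz).trans (mul_le_mul_of_nonneg_left ?_ hC)
    exact Real.rpow_le_rpow_of_nonpos hR hRz (by linarith)
  have hηR : uIcc η (η + R) = Icc η (η + R) := uIcc_of_le (by linarith)
  have htop := norm_intervalIntegral_le_of_forall_mem_uIcc (a := -R) (b := R)
    (f := fun s => Φ (s + (η + R : ℝ) * Complex.I)) fun s _ =>
      hbound _ (by simp [hR.le]) (.inr (by simp [abs_of_nonneg (add_nonneg hη hR.le), hη]))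
  have hright := norm_intervalIntegral_le_of_forall_mem_uIcc (a := η) (b := η + R)
    (f := fun v => Φ ((R : ℝ) + v * Complex.I)) fun v hv =>
      hbound _ (by simpa using (hηR ▸ hv).1) (.inl (by simp [le_abs_self]))
  have hleft := norm_intervalIntegral_le_of_forall_mem_uIcc (a := η) (b := η + R)
    (f := fun v => Φ ((-R : ℂ) + v * Complex.I)) fun v hv =>
      hbound _ (by simpa using (hηR ▸ hv).1) (.inl (by simp [le_abs_self]))
  rw [intervalIntegral_horizontal_eq hR.le hΦ]
  calc
    _ ≤ C * R ^ (-p) * |R - -R| + C * R ^ (-p) * |η + R - η| + C * R ^ (-p) * |η + R - η| := by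
        refine (norm_add_le _ _).trans
          (add_le_add ((norm_sub_le _ _).trans (add_le_add htop ?_)) ?_)
        · rwa [norm_smul, Complex.norm_I, one_mul]
        · rwa [norm_smul, Complex.norm_I, one_mul]
    _ = 4 * C * R ^ (-(p - 1)) := by
        rw [neg_sub, sub_eq_neg_add 1 p, Real.rpow_add_one hR.ne', sub_neg_eq_add,
          add_sub_cancel_left, abs_of_pos hR, abs_of_pos (add_pos hR hR)]
        ring

theorem integral_horizontal_eq_zero {Φ : ℂ → ℂ} {C p η : ℝ} (hC : 0 ≤ C) (hp : 1 < p)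
    (hη : 0 ≤ η) (hΦ : DifferentiableOn ℂ Φ {z | η ≤ z.im})
    (hΦC : ∀ z : ℂ, η ≤ z.im → ‖Φ z‖ ≤ C * (1 + ‖z‖) ^ (-p))
    (hint : Integrable fun s : ℝ => Φ (s + η * Complex.I)) :
    ∫ s : ℝ, Φ (s + η * Complex.I) = 0 := by
  refine tendsto_nhds_unique (intervalIntegral_tendsto_integral hint tendsto_neg_atTop_atBot
    tendsto_id) (squeeze_zero_norm' (a := fun R => 4 * C * R ^ (-(p - 1))) ?_ ?_)
  · filter_upwards [eventually_gt_atTop 0] with R hR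
    exact norm_integral_horizontal_le hC (by linarith) hη hΦ hΦC hR
  · simpa using (tendsto_rpow_neg_atTop (sub_pos.2 hp)).const_mul (4 * C)

/-- The conjugate Poisson kernel `r / (r² + η²)` of the upper half-plane at height `η`, up to a
factor `π`: the smooth truncation of the kernel `1 / r` of the Hilbert transform. -/
def hilbertKernel (η r : ℝ) : ℝ := r / (r ^ 2 + η ^ 2)

/-- The Poisson kernel `η / (r² + η²)` of the upper half-plane at height `η`, up to a factor
`π`. -/
def lorentzKernel (η r : ℝ) : ℝ := η / (r ^ 2 + η ^ 2)

/-- The analytic function `z ↦ ∫ i / (z - y) ∂μ y` of the upper half-plane whose real and imaginary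
parts are the convolutions of `μ` with `lorentzKernel` and `hilbertKernel`. -/
def cauchyTransform (μ : Measure ℝ) (z : ℂ) : ℂ := -Complex.I * resolventTransform μ z

theorem measurable_hilbertKernel (η : ℝ) : Measurable (hilbertKernel η) := by
  unfold hilbertKernel
  fun_prop

theorem measurable_lorentzKernel (η : ℝ) : Measurable (lorentzKernel η) := by
  unfold lorentzKernel
  fun_prop

theorem odd_hilbertKernel (η : ℝ) : Function.Odd (hilbertKernel η) := fun r => by
  simp only [hilbertKernel, neg_div, neg_sq]

theorem lorentzKernel_pos {η : ℝ} (hη : 0 < η) (r : ℝ) : 0 < lorentzKernel η r := by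
  unfold lorentzKernel
  positivity

theorem lintegral_enorm_lorentzKernel {η : ℝ} (hη : 0 < η) :
    ∫⁻ r, ‖lorentzKernel η r‖ₑ = ENNReal.ofReal Real.pi := by
  have hscale : lorentzKernel η = fun r => η⁻¹ * (1 + (r / η) ^ 2)⁻¹ := by
    ext r
    have : r ^ 2 + η ^ 2 ≠ 0 := by positivity
    have : 1 + (r / η) ^ 2 ≠ 0 := by positivity
    unfold lorentzKernel
    field_simp
    ring
  have hint : Integrable (lorentzKernel η) := by
    rw [hscale]
    exact (integrable_inv_one_add_sq.comp_div hη.ne').const_mul _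
  simp only [Real.enorm_of_nonneg ((lorentzKernel_pos hη _).le)]
  rw [← ofReal_integral_eq_lintegral_ofReal hint
      (.of_forall fun r => (lorentzKernel_pos hη r).le), hscale,
    integral_const_mul, Measure.integral_comp_div (fun x : ℝ => (1 + x ^ 2)⁻¹),
    integral_univ_inv_one_add_sq, abs_of_pos hη, smul_eq_mul, inv_mul_cancel_left₀ hη.ne']

theorem abs_hilbertKernel_le {η : ℝ} (hη : 0 < η) (r : ℝ) :
    |hilbertKernel η r| ≤ (1 / η + 1) * (1 + |r|)⁻¹ := by
  rw [hilbertKernel, abs_div, abs_of_pos (by positivity : 0 < r ^ 2 + η ^ 2), ← div_eq_mul_inv,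
    div_le_div_iff₀ (by positivity) (by positivity), ← sq_abs r]
  have : (1 / η + 1) * (|r| ^ 2 + η ^ 2) = |r| ^ 2 / η + η + |r| ^ 2 + η ^ 2 := by
    field_simp
    ring
  have hamgm : |r| ≤ |r| ^ 2 / η + η := by
    rw [← sub_nonneg]
    have : |r| ^ 2 / η + η - |r| = ((|r| - η / 2) ^ 2 + 3 / 4 * η ^ 2) / η := by
      field_simp
      ring
    rw [this]
    positivity
  nlinarith [sq_nonneg η]

theorem memLp_hilbertKernel {η q : ℝ} (hη : 0 < η) (hq : 1 < q) :
    MemLp (hilbertKernel η) (ENNReal.ofReal q) :=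
  memLp_of_norm_le_mul_rpow (a := 1) (one_pos.trans hq) (by simpa using hq)
    (measurable_hilbertKernel η).aestronglyMeasurable fun r => by
      simpa only [Real.norm_eq_abs, Real.rpow_neg_one] using abs_hilbertKernel_le hη r

section CauchyTransform

variable {μ : Measure ℝ} {z : ℂ}

theorem notMem_range_ofReal_of_im_pos (hz : 0 < z.im) (s : Set ℝ) :
    z ∉ algebraMap ℝ ℂ '' s := by
  rintro ⟨y, -, rfl⟩
  simp at hz

theorem resolvent_real (z : ℂ) (y : ℝ) : resolvent z y = ((y : ℂ) - z)⁻¹ := by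
  rw [resolvent, Ring.inverse_eq_inv', Complex.coe_algebraMap]

theorem neg_I_mul_resolvent_re (z : ℂ) (y : ℝ) :
    (-Complex.I * resolvent z y).re = lorentzKernel z.im (z.re - y) := by
  rw [resolvent_real, lorentzKernel]
  simp only [neg_mul, Complex.neg_re, Complex.mul_re, Complex.I_re, Complex.inv_re, Complex.sub_re,
    Complex.ofReal_re, Complex.normSq_apply, Complex.sub_im, Complex.ofReal_im, zero_sub, mul_neg,
    neg_neg, zero_mul, Complex.I_im, Complex.inv_im, one_mul]
  ring

theorem neg_I_mul_resolvent_im (z : ℂ) (y : ℝ) :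
    (-Complex.I * resolvent z y).im = hilbertKernel z.im (z.re - y) := by
  rw [resolvent_real, hilbertKernel]
  simp only [neg_mul, Complex.neg_im, Complex.mul_im, Complex.I_re, Complex.inv_im, Complex.sub_im,
    Complex.ofReal_im, zero_sub, neg_neg, Complex.normSq_apply, Complex.sub_re, Complex.ofReal_re,
    mul_neg, zero_mul, Complex.I_im, Complex.inv_re, one_mul, zero_add]
  ring

variable [IsFiniteMeasure μ]

theorem differentiableAt_cauchyTransform (hz : 0 < z.im) :
    DifferentiableAt ℂ (cauchyTransform μ) z :=
  (hasDerivAt_resolventTransform z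
    (notMem_range_ofReal_of_im_pos hz _)).differentiableAt.const_mul _

theorem integrable_neg_I_mul_resolvent (hz : 0 < z.im) :
    Integrable (fun y : ℝ => -Complex.I * resolvent z y) μ :=
  (integrable_resolvent (notMem_range_ofReal_of_im_pos hz _)).const_mul _

theorem cauchyTransform_re (hz : 0 < z.im) :
    (cauchyTransform μ z).re = ∫ y, lorentzKernel z.im (z.re - y) ∂μ := by
  rw [cauchyTransform, resolventTransform_apply, ← integral_const_mul]
  simpa only [Complex.reCLM_apply, neg_I_mul_resolvent_re] using
    (Complex.reCLM.integral_comp_comm (integrable_neg_I_mul_resolvent (μ := μ) hz)).symm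

theorem cauchyTransform_im (hz : 0 < z.im) :
    (cauchyTransform μ z).im = ∫ y, hilbertKernel z.im (z.re - y) ∂μ := by
  rw [cauchyTransform, resolventTransform_apply, ← integral_const_mul]
  simpa only [Complex.imCLM_apply, neg_I_mul_resolvent_im] using
    (Complex.imCLM.integral_comp_comm (integrable_neg_I_mul_resolvent (μ := μ) hz)).symm

theorem cauchyTransform_re_pos [NeZero μ] (hz : 0 < z.im) : 0 < (cauchyTransform μ z).re := by
  have hint : Integrable (fun y => lorentzKernel z.im (z.re - y)) μ := by
    simpa only [Complex.reCLM_apply, neg_I_mul_resolvent_re] using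
      Complex.reCLM.integrable_comp (integrable_neg_I_mul_resolvent (μ := μ) hz)
  rw [cauchyTransform_re hz, integral_pos_iff_support_of_nonneg
    (fun y => (lorentzKernel_pos hz _).le) hint, show Function.support _ = univ from
    eq_univ_of_forall fun y => (lorentzKernel_pos hz _).ne']
  exact NeZero.pos _

theorem norm_cauchyTransform_le {η M : ℝ} (hη : 0 < η) (hM : ∀ᵐ y ∂μ, |y| ≤ M) (hz : η ≤ z.im) :
    ‖cauchyTransform μ z‖ ≤ ((1 + M) / η + 1) * (1 + ‖z‖)⁻¹ * μ.real univ := by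
  rw [cauchyTransform, norm_mul, norm_neg, Complex.norm_I, one_mul]
  refine norm_integral_le_of_norm_le_const (hM.mono fun y hy => ?_)
  have hηw : η ≤ ‖(y : ℂ) - z‖ := by
    have := Complex.abs_im_le_norm (y - z)
    rw [Complex.sub_im, Complex.ofReal_im, zero_sub, abs_neg] at this
    exact hz.trans ((le_abs_self _).trans this)
  have hzw : ‖z‖ ≤ M + ‖(y : ℂ) - z‖ := by
    have := norm_sub_norm_le z y
    rw [Complex.norm_real, Real.norm_eq_abs, norm_sub_rev] at this
    linarith
  have hM0 : 0 ≤ M := (abs_nonneg y).trans hy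
  rw [resolvent_real, norm_inv, ← div_eq_mul_inv, inv_eq_one_div,
    div_le_div_iff₀ (hη.trans_le hηw) (by positivity), one_mul]
  calc 1 + ‖z‖ ≤ (1 + M) / η * η + ‖(y : ℂ) - z‖ := by
        rw [div_mul_cancel₀ _ hη.ne']
        linarith
    _ ≤ (1 + M) / η * ‖(y : ℂ) - z‖ + ‖(y : ℂ) - z‖ := by gcongr
    _ = ((1 + M) / η + 1) * ‖(y : ℂ) - z‖ := by ring

end CauchyTransform

theorem exists_eLpNorm_cauchyTransform_le {p : ℝ} (hp : 1 < p) (hp2 : p ≤ 2) :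
    ∃ C : ℝ≥0, ∀ (μ : Measure ℝ) [IsFiniteMeasure μ] (M : ℝ), (∀ᵐ y ∂μ, |y| ≤ M) → ∀ η : ℝ, 0 < η →
      eLpNorm (fun x : ℝ => cauchyTransform μ (x + η * Complex.I)) (ENNReal.ofReal p) volume ≤
        C * eLpNorm (fun x : ℝ => (cauchyTransform μ (x + η * Complex.I)).re) (ENNReal.ofReal p)
          volume := by
  obtain ⟨C, hC⟩ := exists_eLpNorm_le_mul_eLpNorm_re (α := ℝ) (μ := volume) hp hp2
  refine ⟨C, fun μ _ M hM η hη => ?_⟩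
  rcases eq_zero_or_neZero μ with rfl | _
  · simp [cauchyTransform]
  have hp0 : 0 < p := one_pos.trans hp
  have him : ∀ s : ℝ, (s + η * Complex.I : ℂ).im = η := by simp
  have hpos : ∀ z : ℂ, η ≤ z.im → 0 < (cauchyTransform μ z).re := fun z hz =>
    cauchyTransform_re_pos (hη.trans_le hz)
  obtain ⟨y, hy⟩ := hM.exists
  have hM0 : 0 ≤ M := (abs_nonneg y).trans hy
  set K : ℝ := ((1 + M) / η + 1) * μ.real univ
  have hbound : ∀ z : ℂ, η ≤ z.im → ‖cauchyTransform μ z‖ ≤ K * (1 + ‖z‖)⁻¹ := fun z hz =>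
    (norm_cauchyTransform_le hη hM hz).trans_eq (by ring)
  have hcont : Continuous fun x : ℝ => cauchyTransform μ (x + η * Complex.I) :=
    continuous_iff_continuousAt.2 fun x =>
      ContinuousAt.comp (f := fun x : ℝ => (x + η * Complex.I : ℂ))
        (differentiableAt_cauchyTransform (by rwa [him])).continuousAt (by fun_prop)
  have hF : MemLp (fun x : ℝ => cauchyTransform μ (x + η * Complex.I)) (ENNReal.ofReal p) := by
    refine memLp_of_norm_le_mul_rpow (C := K) (a := 1) hp0 (by simpa using hp)
      hcont.aestronglyMeasurable fun x => (hbound _ (him x).ge).trans ?_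
    rw [Real.rpow_neg_one, Real.norm_eq_abs]
    gcongr
    simpa using Complex.abs_re_le_norm (x + η * Complex.I)
  refine hC _ hF (fun x => hpos _ (him x).ge) ?_
  refine integral_horizontal_eq_zero (Φ := fun z => cauchyTransform μ z ^ (p : ℂ)) (C := K ^ p)
    (by positivity) hp hη.le (fun z hz => ?_) (fun z hz => ?_) ?_
  · exact ((differentiableAt_cauchyTransform (hη.trans_le hz)).cpow (differentiableAt_const _)
      (.inl (hpos z hz))).differentiableWithinAt
  · rw [Complex.norm_cpow_real, Real.rpow_neg (by positivity), ← Real.inv_rpow (by positivity),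
      ← Real.mul_rpow (by positivity) (by positivity)]
    exact Real.rpow_le_rpow (norm_nonneg _) (hbound z hz) hp0.le
  · exact integrable_cpow_of_memLp hp0 hF

theorem integral_withDensity_ofReal_comp_sub {g : ℝ → ℝ} (hg : Measurable g) (hg0 : 0 ≤ g)
    (k : ℝ → ℝ) (x : ℝ) :
    ∫ y, k (x - y) ∂volume.withDensity (fun y => ENNReal.ofReal (g y)) = (k ⋆ g) x := by
  rw [integral_withDensity_eq_integral_toReal_smul (by fun_prop) (by simp), convolution_lsmul_swap]
  simp only [ENNReal.toReal_ofReal (hg0 _), smul_eq_mul, mul_comm]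

theorem exists_eLpNorm_hilbertKernel_convolution_le_of_nonneg {p : ℝ} (hp : 1 < p) (hp2 : p ≤ 2) :
    ∃ C : ℝ≥0, ∀ η > 0, ∀ g : ℝ → ℝ, Continuous g → HasCompactSupport g → 0 ≤ g →
      eLpNorm (hilbertKernel η ⋆ g) (ENNReal.ofReal p) volume ≤
        C * eLpNorm g (ENNReal.ofReal p) volume := by
  obtain ⟨C, hC⟩ := exists_eLpNorm_cauchyTransform_le hp hp2
  refine ⟨C * Real.pi.toNNReal, fun η hη g hg hg_supp hg0 => ?_⟩
  have hg_int : Integrable g := hg.integrable_of_hasCompactSupport hg_supp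
  set μ := volume.withDensity fun y => ENNReal.ofReal (g y) with hμ
  have : IsFiniteMeasure μ := isFiniteMeasure_withDensity_ofReal hg_int.2
  obtain ⟨M, hM⟩ := hg_supp.isCompact.isBounded.exists_norm_le
  have hμM : ∀ᵐ y ∂μ, |y| ≤ M := by
    rw [hμ, ae_withDensity_iff (by fun_prop)]
    refine .of_forall fun y hy => hM y (subset_tsupport g fun h => hy ?_)
    simp [h]
  have him : ∀ x : ℝ, 0 < (x + η * Complex.I : ℂ).im := fun x => by simpa using hη
  have hF_im : ∀ x : ℝ, (cauchyTransform μ (x + η * Complex.I)).im = (hilbertKernel η ⋆ g) x := by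
    intro x
    rw [cauchyTransform_im (him x), ← integral_withDensity_ofReal_comp_sub hg.measurable hg0]
    simp [hμ]
  have hF_re : ∀ x : ℝ, (cauchyTransform μ (x + η * Complex.I)).re = (lorentzKernel η ⋆ g) x := by
    intro x
    rw [cauchyTransform_re (him x), ← integral_withDensity_ofReal_comp_sub hg.measurable hg0]
    simp [hμ]
  calc eLpNorm (hilbertKernel η ⋆ g) (ENNReal.ofReal p) volume
      ≤ eLpNorm (fun x : ℝ => cauchyTransform μ (x + η * Complex.I)) (ENNReal.ofReal p) volume :=
        eLpNorm_mono fun x => by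
          rw [← hF_im]
          exact Complex.abs_im_le_norm _
    _ ≤ C * eLpNorm (lorentzKernel η ⋆ g) (ENNReal.ofReal p) volume := by
        simpa only [hF_re] using hC μ M hμM η hη
    _ ≤ C * (ENNReal.ofReal Real.pi * eLpNorm g (ENNReal.ofReal p) volume) := by
        gcongr
        rw [← lintegral_enorm_lorentzKernel hη]
        exact eLpNorm_convolution_le hp.le (measurable_lorentzKernel η).aestronglyMeasurable
          hg.aestronglyMeasurable
    _ = _ := by
        rw [ENNReal.coe_mul, mul_assoc]
        rfl

theorem exists_convolutionBound_hilbertKernel_of_le_two {p : ℝ} (hp : 1 < p) (hp2 : p ≤ 2) :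
    ∃ C : ℝ≥0, ∀ η > 0, ConvolutionBound (hilbertKernel η) p C := by
  obtain ⟨C, hC⟩ := exists_eLpNorm_hilbertKernel_convolution_le_of_nonneg hp hp2
  refine ⟨2 * C, fun η hη => ?_⟩
  have hpq := Real.HolderConjugate.conjExponent hp
  have hk : MemLp (hilbertKernel η) (ENNReal.ofReal p.conjExponent) :=
    memLp_hilbertKernel hη hpq.symm.lt
  refine .of_hasCompactSupport hpq hk fun g hg hg_supp => ?_
  have hmax : Continuous fun x : ℝ => max x 0 := by fun_prop
  have hpart : ∀ f : ℝ → ℝ, Continuous f → HasCompactSupport f → (∀ x, |f x| = |g x|) →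
      MemLp (fun x => max (f x) 0) (ENNReal.ofReal p) ∧
      eLpNorm (hilbertKernel η ⋆ fun x => max (f x) 0) (ENNReal.ofReal p) volume ≤
        C * eLpNorm g (ENNReal.ofReal p) volume := by
    intro f hf hf_supp hfg
    have hcont := hmax.comp hf
    have hsupp := hf_supp.comp_left (g := fun x => max x 0) (max_self _)
    refine ⟨hcont.memLp_of_hasCompactSupport hsupp,
      (hC η hη _ hcont hsupp fun x => le_max_right _ _).trans ?_⟩
    gcongr
    refine eLpNorm_mono fun x => ?_
    rw [Real.norm_eq_abs, Real.norm_eq_abs, ← hfg]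
    exact abs_max_le_max_abs_abs.trans (by simp)
  obtain ⟨hpos_mem, hpos⟩ := hpart g hg hg_supp fun _ => rfl
  obtain ⟨hneg_mem, hneg⟩ := hpart (-g) hg.neg hg_supp.neg fun x => abs_neg _
  have hsplit : hilbertKernel η ⋆ g = (hilbertKernel η ⋆ fun x => max (g x) 0) -
      (hilbertKernel η ⋆ fun x => max ((-g) x) 0) := by
    ext x
    rw [Pi.sub_apply, ← convolution_sub_apply (convolutionExistsAt_of_memLp hpq hk hpos_mem x)
      (convolutionExistsAt_of_memLp hpq hk hneg_mem x)]
    congr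
    ext y
    exact (max_zero_sub_max_neg_zero_eq_self (g y)).symm
  calc eLpNorm (hilbertKernel η ⋆ g) (ENNReal.ofReal p) volume
      ≤ C * eLpNorm g (ENNReal.ofReal p) volume + C * eLpNorm g (ENNReal.ofReal p) volume := by
        rw [hsplit]
        exact (eLpNorm_sub_le (aestronglyMeasurable_convolution hk.1 hpos_mem.1)
          (aestronglyMeasurable_convolution hk.1 hneg_mem.1) (by simpa using hp.le)).trans
          (add_le_add hpos hneg)
    _ = ↑(2 * C) * eLpNorm g (ENNReal.ofReal p) volume := by
        rw [ENNReal.coe_mul, ENNReal.coe_ofNat]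
        ring

theorem exists_convolutionBound_hilbertKernel {p : ℝ} (hp : 1 < p) :
    ∃ C : ℝ≥0, ∀ η > 0, ConvolutionBound (hilbertKernel η) p C := by
  rcases le_total p 2 with hp2 | hp2
  · exact exists_convolutionBound_hilbertKernel_of_le_two hp hp2
  · have hpq := Real.HolderConjugate.conjExponent hp
    have hq2 : p.conjExponent ≤ 2 := by
      rw [Real.conjExponent, div_le_iff₀ (by linarith)]
      linarith
    obtain ⟨C, hC⟩ := exists_convolutionBound_hilbertKernel_of_le_two hpq.symm.lt hq2
    exact ⟨C, fun η hη => .of_holderConjugate hpq (memLp_hilbertKernel hη hp)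
      (memLp_hilbertKernel hη hpq.symm.lt) (odd_hilbertKernel η) (hC η hη)⟩

section Convolution

variable {E : Type*} [NormedAddCommGroup E] [NormedSpace ℝ E] [FiniteDimensional ℝ E]
  [MeasureSpace E] [BorelSpace E] [(volume : Measure E).IsAddHaarMeasure]
  {k l : E → ℝ} {p q : ℝ} {C D : ℝ≥0}

theorem ConvolutionBound.of_integrable (hp : 1 ≤ p) (hk : Integrable k)
    (hC : ∫⁻ x, ‖k x‖ₑ ≤ C) : ConvolutionBound k p C := fun g hg =>
  (eLpNorm_convolution_le hp hk.1 hg.1).trans (by gcongr)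

theorem ConvolutionBound.add (hpq : p.HolderConjugate q) (hk : MemLp k (ENNReal.ofReal q))
    (hl : MemLp l (ENNReal.ofReal q)) (hkC : ConvolutionBound k p C)
    (hlD : ConvolutionBound l p D) : ConvolutionBound (k + l) p (C + D) := by
  intro g hg
  have hadd : (k + l) ⋆ g = k ⋆ g + l ⋆ g := by
    ext x
    exact (convolutionExistsAt_of_memLp hpq hk hg x).add_distrib
      (convolutionExistsAt_of_memLp hpq hl hg x)
  rw [hadd, ENNReal.coe_add, add_mul]
  exact (eLpNorm_add_le (aestronglyMeasurable_convolution hk.1 hg.1)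
    (aestronglyMeasurable_convolution hl.1 hg.1) (by simpa using hpq.lt.le)).trans
    (add_le_add (hkC g hg) (hlD g hg))

end Convolution

/-- The odd kernel `e^{-(ε/r)²} / r`, a truncation of `1 / r` near the origin. -/
def gaussHilbertKernel (ε r : ℝ) : ℝ := Real.exp (-(ε / r) ^ 2) / r

theorem measurable_gaussHilbertKernel (ε : ℝ) : Measurable (gaussHilbertKernel ε) := by
  unfold gaussHilbertKernel
  fun_prop

theorem abs_exp_neg_sq_sub_inv_le (x : ℝ) :
    |Real.exp (-x ^ 2) - (1 + x ^ 2)⁻¹| ≤ |x| * (1 + x ^ 2)⁻¹ := by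
  have hx : 0 < 1 + x ^ 2 := by positivity
  have hupper : (1 + x ^ 2) * Real.exp (-x ^ 2) ≤ 1 := by
    rw [Real.exp_neg, ← div_eq_mul_inv, div_le_one (Real.exp_pos _), add_comm]
    exact Real.add_one_le_exp _
  have hlower : 1 - (1 + x ^ 2) * Real.exp (-x ^ 2) ≤ |x| := by
    rcases le_total |x| 1 with h | h
    · have := Real.add_one_le_exp (-x ^ 2)
      calc 1 - (1 + x ^ 2) * Real.exp (-x ^ 2) ≤ |x| ^ 4 := by
            have := mul_le_mul_of_nonneg_left this hx.le
            rw [Even.pow_abs ⟨2, rfl⟩]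
            linarith [pow_add x 2 2]
        _ ≤ |x| := pow_le_of_le_one (abs_nonneg x) h four_ne_zero
    · nlinarith [Real.exp_pos (-x ^ 2)]
  calc |Real.exp (-x ^ 2) - (1 + x ^ 2)⁻¹|
      = (1 - (1 + x ^ 2) * Real.exp (-x ^ 2)) * (1 + x ^ 2)⁻¹ := by
        rw [← abs_neg, ← abs_of_nonneg (mul_nonneg (sub_nonneg.2 hupper) (inv_pos.2 hx).le)]
        congr 1
        field_simp
        ring
    _ ≤ |x| * (1 + x ^ 2)⁻¹ := by gcongr

theorem abs_gaussHilbertKernel_sub_hilbertKernel_le {ε : ℝ} (hε : 0 < ε) (r : ℝ) :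
    |gaussHilbertKernel ε r - hilbertKernel ε r| ≤ lorentzKernel ε r := by
  rcases eq_or_ne r 0 with rfl | hr
  · simpa [gaussHilbertKernel, hilbertKernel] using (lorentzKernel_pos hε 0).le
  · calc |gaussHilbertKernel ε r - hilbertKernel ε r|
        = |Real.exp (-(ε / r) ^ 2) - (1 + (ε / r) ^ 2)⁻¹| / |r| := by
          rw [gaussHilbertKernel, hilbertKernel, ← abs_div]
          congr 1
          field_simp
      _ ≤ |ε / r| * (1 + (ε / r) ^ 2)⁻¹ / |r| := by
          gcongr
          exact abs_exp_neg_sq_sub_inv_le _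
      _ = lorentzKernel ε r := by
          rw [lorentzKernel, abs_div, abs_of_pos hε, div_pow, ← sq_abs r]
          have := abs_pos.2 hr
          field_simp

theorem memLp_gaussHilbertKernel {ε q : ℝ} (hε : 0 < ε) (hq : 1 < q) :
    MemLp (gaussHilbertKernel ε) (ENNReal.ofReal q) := by
  refine (memLp_hilbertKernel hε hq).mono (measurable_gaussHilbertKernel ε).aestronglyMeasurable
    (.of_forall fun r => ?_)
  rcases eq_or_ne r 0 with rfl | hr
  · simp [gaussHilbertKernel]
  · calc |gaussHilbertKernel ε r| = Real.exp (-(ε / r) ^ 2) / |r| := by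
          rw [gaussHilbertKernel, abs_div, abs_of_pos (Real.exp_pos _)]
      _ ≤ (1 + (ε / r) ^ 2)⁻¹ / |r| := by
          gcongr
          rw [Real.exp_neg, add_comm]
          exact inv_anti₀ (by positivity) (Real.add_one_le_exp _)
      _ = |hilbertKernel ε r| := by
          rw [hilbertKernel, abs_div, abs_of_pos (by positivity : 0 < r ^ 2 + ε ^ 2), div_pow,
            ← sq_abs r]
          have := abs_pos.2 hr
          field_simp

theorem exists_convolutionBound_gaussHilbertKernel {p : ℝ} (hp : 1 < p) :
    ∃ C : ℝ≥0, ∀ ε > 0, ConvolutionBound (gaussHilbertKernel ε) p C := by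
  obtain ⟨C, hC⟩ := exists_convolutionBound_hilbertKernel hp
  have hpq := Real.HolderConjugate.conjExponent hp
  refine ⟨C + Real.toNNReal Real.pi, fun ε hε => ?_⟩
  have hh := memLp_hilbertKernel hε hpq.symm.lt
  have hd := (memLp_gaussHilbertKernel hε hpq.symm.lt).sub hh
  have hd_le : ∫⁻ r, ‖gaussHilbertKernel ε r - hilbertKernel ε r‖ₑ ≤ ENNReal.ofReal Real.pi := by
    rw [← lintegral_enorm_lorentzKernel hε]
    refine lintegral_mono fun r => ?_
    rw [enorm_le_iff_norm_le, Real.norm_of_nonneg (lorentzKernel_pos hε r).le]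
    exact abs_gaussHilbertKernel_sub_hilbertKernel_le hε r
  rw [← add_sub_cancel (hilbertKernel ε) (gaussHilbertKernel ε)]
  exact (hC ε hε).add hpq hh hd
    (.of_integrable hp.le ⟨hd.1, hd_le.trans_lt ENNReal.ofReal_lt_top⟩ hd_le)

section Rotations

variable {E : Type*} [NormedAddCommGroup E] [NormedSpace ℝ E] [FiniteDimensional ℝ E]
  [MeasureSpace E] [BorelSpace E] [(volume : Measure E).IsAddHaarMeasure]

theorem lintegral_eq_lintegral_slab {ℓ : E →L[ℝ] ℝ} {v : E} (hv : ℓ v = 1) {F : E → ℝ≥0∞}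
    (hF : Measurable F) :
    ∫⁻ x, F x = ∫⁻ x in ℓ ⁻¹' Ico 0 1, ∫⁻ s : ℝ, F (x + s • v) := by
  have hslab : MeasurableSet (ℓ ⁻¹' Ico 0 1) := ℓ.measurable measurableSet_Ico
  have hind : Measurable ((ℓ ⁻¹' Ico 0 1).indicator (1 : E → ℝ≥0∞)) :=
    measurable_one.indicator hslab
  have hfiber (y : E) : ∫⁻ s : ℝ, (ℓ ⁻¹' Ico 0 1).indicator 1 (y - s • v) = (1 : ℝ≥0∞) := by
    have hset : ∀ s : ℝ, (ℓ ⁻¹' Ico 0 1).indicator (1 : E → ℝ≥0∞) (y - s • v) =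
        (Ioc (ℓ y - 1) (ℓ y)).indicator 1 s := fun s => by
      refine indicator_eq_indicator ?_ rfl
      simp only [mem_preimage, map_sub, map_smul, hv, smul_eq_mul, mul_one, mem_Ico, mem_Ioc]
      constructor <;> rintro ⟨_, _⟩ <;> constructor <;> linarith
    simp only [hset, lintegral_indicator_one measurableSet_Ioc, Real.volume_Ioc, sub_sub_cancel,
      ENNReal.ofReal_one]
  calc ∫⁻ x, F x = ∫⁻ y, ∫⁻ s : ℝ, (ℓ ⁻¹' Ico 0 1).indicator 1 (y - s • v) * F y := by
        refine lintegral_congr fun y => ?_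
        rw [lintegral_mul_const (F y) (f := fun s : ℝ => (ℓ ⁻¹' Ico 0 1).indicator 1 (y - s • v))
          (hind.comp (by fun_prop)), hfiber, one_mul]
    _ = ∫⁻ s : ℝ, ∫⁻ y, (ℓ ⁻¹' Ico 0 1).indicator 1 (y - s • v) * F y := by
        refine lintegral_lintegral_swap (Measurable.aemeasurable ?_)
        exact (hind.comp (by fun_prop)).mul (by fun_prop)
    _ = ∫⁻ s : ℝ, ∫⁻ x, (ℓ ⁻¹' Ico 0 1).indicator 1 x * F (x + s • v) := by
        refine lintegral_congr fun s => ?_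
        rw [← lintegral_add_right_eq_self (fun y => _ * F y) (s • v)]
        simp only [add_sub_cancel_right]
    _ = ∫⁻ x, ∫⁻ s : ℝ, (ℓ ⁻¹' Ico 0 1).indicator 1 x * F (x + s • v) := by
        refine lintegral_lintegral_swap (Measurable.aemeasurable ?_)
        exact (hind.comp (by fun_prop)).mul (by fun_prop)
    _ = ∫⁻ x in ℓ ⁻¹' Ico 0 1, ∫⁻ s : ℝ, F (x + s • v) := by
        rw [← lintegral_indicator hslab]
        refine lintegral_congr fun x => ?_
        rw [lintegral_const_mul _ (by fun_prop)]
        by_cases hx : x ∈ ℓ ⁻¹' Ico 0 1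
        · rw [indicator_of_mem hx, indicator_of_mem hx, Pi.one_apply, one_mul]
        · rw [indicator_of_notMem hx, indicator_of_notMem hx, zero_mul]

theorem eLpNorm_integral_mul_comp_line_le {k : ℝ → ℝ} {p : ℝ} {C : ℝ≥0} (hp : 0 < p)
    (hk : Measurable k) (hkC : ConvolutionBound k p C) {v : E} (hv : v ≠ 0) {g : E → ℝ}
    (hg : Continuous g) (hg_supp : HasCompactSupport g) :
    eLpNorm (fun x => ∫ r : ℝ, k r * g (x - r • v)) (ENNReal.ofReal p) volume ≤
      C * eLpNorm g (ENNReal.ofReal p) volume := by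
  obtain ⟨ℓ, hℓ⟩ := SeparatingDual.exists_eq_one (R := ℝ) hv
  have hK : StronglyMeasurable fun x => ∫ r : ℝ, k r * g (x - r • v) :=
    StronglyMeasurable.integral_prod_right (f := fun x r => k r * g (x - r • v))
      (Measurable.stronglyMeasurable (by fun_prop))
  have hline (x : E) : ∫⁻ s : ℝ, ‖∫ r : ℝ, k r * g (x + s • v - r • v)‖ₑ ^ p ≤
      C ^ p * ∫⁻ s : ℝ, ‖g (x + s • v)‖ₑ ^ p := by
    have hline_cont : Continuous fun s : ℝ => x + s • v := by fun_prop
    have hline_closed : Topology.IsClosedEmbedding fun s : ℝ => x + s • v :=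
      (Homeomorph.addLeft x).isClosedEmbedding.comp (isClosedEmbedding_smul_left hv)
    have := hkC _ ((hg.comp hline_cont).memLp_of_hasCompactSupport
      (hg_supp.comp_isClosedEmbedding hline_closed))
    rw [eLpNorm_ofReal_le_iff hp, ENNReal.mul_rpow_of_nonneg _ _ hp.le,
      eLpNorm_ofReal_rpow hp] at this
    simpa only [convolution_def, lsmul_apply, smul_eq_mul, Function.comp_apply, sub_smul,
      ← add_sub_assoc] using this
  refine (eLpNorm_ofReal_le_iff hp).2 ?_
  rw [ENNReal.mul_rpow_of_nonneg _ _ hp.le, eLpNorm_ofReal_rpow hp,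
    lintegral_eq_lintegral_slab hℓ (by fun_prop), lintegral_eq_lintegral_slab hℓ (by fun_prop),
    ← lintegral_const_mul' _ _ (ENNReal.rpow_ne_top_of_nonneg hp.le ENNReal.coe_ne_top)]
  exact lintegral_mono hline

end Rotations

section Substitution

theorem lintegral_comp_smul {E : Type*} [NormedAddCommGroup E] [NormedSpace ℝ E]
    [FiniteDimensional ℝ E] [MeasurableSpace E] [BorelSpace E] (μ : Measure E) [μ.IsAddHaarMeasure]
    {r : ℝ} (hr : r ≠ 0) (f : E → ℝ≥0∞) :
    ∫⁻ x, f (r • x) ∂μ = ENNReal.ofReal (|r| ^ Module.finrank ℝ E)⁻¹ * ∫⁻ x, f x ∂μ := by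
  rw [← abs_pow, ← abs_inv, ← smul_eq_mul, ← lintegral_smul_measure,
    ← Measure.map_addHaar_smul μ hr]
  exact (lintegral_map_equiv f (MeasurableEquiv.smul₀ r hr)).symm

theorem lintegral_Ioi_comp_mul_left {a : ℝ} (ha : 0 < a) (f : ℝ → ℝ≥0∞) :
    ∫⁻ x in Ioi 0, ENNReal.ofReal a * f (a * x) = ∫⁻ x in Ioi 0, f x := by
  have himage : (a * ·) '' Ioi (0 : ℝ) = Ioi 0 := by
    rw [image_mul_left_Ioi ha, mul_zero]
  have := lintegral_image_eq_lintegral_abs_deriv_mul (f := (a * ·)) (f' := fun _ => a)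
    (measurableSet_Ioi (a := 0)) (fun x _ => (hasDerivAt_const_mul a).hasDerivWithinAt)
    (mul_right_injective₀ ha.ne').injOn f
  rw [himage, abs_of_pos ha] at this
  exact this.symm

theorem lintegral_Ioi_comp_inv (f : ℝ → ℝ≥0∞) :
    ∫⁻ x in Ioi 0, ENNReal.ofReal (x ^ 2)⁻¹ * f x⁻¹ = ∫⁻ x in Ioi 0, f x := by
  have himage : (·⁻¹) '' Ioi (0 : ℝ) = Ioi 0 := by
    ext x
    simp [inv_pos]
  have := lintegral_image_eq_lintegral_abs_deriv_mul (f := (·⁻¹)) (f' := fun x : ℝ => -(x ^ 2)⁻¹)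
    measurableSet_Ioi (fun x hx => (hasDerivAt_inv (ne_of_gt hx)).hasDerivWithinAt)
    inv_injective.injOn f
  simpa only [himage, abs_neg, abs_inv, abs_sq] using this.symm

theorem lintegral_eq_two_mul_lintegral_Ioi_of_even {f : ℝ → ℝ≥0∞} (hf : Function.Even f) :
    ∫⁻ x, f x = 2 * ∫⁻ x in Ioi 0, f x := by
  have hneg : ∫⁻ x in Iic 0, f x = ∫⁻ x in Ioi 0, f x := by
    rw [← restrict_Iio_eq_restrict_Iic, ← neg_zero (G := ℝ), ← neg_Ioi, neg_zero, ← neg_preimage,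
      ← (Measure.measurePreserving_neg volume).setLIntegral_comp_preimage_emb
        (MeasurableEquiv.neg ℝ).measurableEmbedding]
    simp only [neg_preimage, neg_neg, hf _]
  rw [← lintegral_add_compl f measurableSet_Ioi, compl_Ioi, hneg, two_mul]

theorem image_mul_sub_div_Ioi {a b : ℝ} (ha : 0 < a) (hb : 0 < b) :
    (fun x => a * x - b / x) '' Ioi 0 = univ := by
  refine eq_univ_of_forall fun y => ?_
  have hab : 0 < 4 * a * b := by positivity
  have hD : |y| < √(y ^ 2 + 4 * a * b) := by
    rw [← Real.sqrt_sq_eq_abs]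
    exact Real.sqrt_lt_sqrt (sq_nonneg y) (by linarith)
  have hx : 0 < (y + √(y ^ 2 + 4 * a * b)) / (2 * a) :=
    div_pos (by linarith [neg_abs_le y]) (by positivity)
  have hD_sq : √(y ^ 2 + 4 * a * b) ^ 2 = y ^ 2 + 4 * a * b := Real.sq_sqrt (by positivity)
  refine ⟨_, hx, ?_⟩
  generalize hx_eq : (y + √(y ^ 2 + 4 * a * b)) / (2 * a) = x at hx
  have hD_eq : √(y ^ 2 + 4 * a * b) = 2 * a * x - y := by
    rw [← hx_eq]
    field_simp
    ring
  rw [hD_eq] at hD_sq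
  have hroot : a * (a * x ^ 2 - y * x - b) = 0 := by linarith
  have := (mul_eq_zero_iff_left ha.ne').1 hroot
  dsimp only
  field_simp
  linarith

-- The substitution `x ↦ b / (a x)` exchanges the two terms of the derivative `a + b / x²` of
-- `x ↦ a x - b / x`, up to the sign of the argument of `f`.
theorem lintegral_Ioi_div_sq_mul_comp_mul_sub_div {a b : ℝ} (ha : 0 < a) (hb : 0 < b)
    {f : ℝ → ℝ≥0∞} (hf : Function.Even f) :
    ∫⁻ x in Ioi 0, ENNReal.ofReal (b * (x ^ 2)⁻¹) * f (a * x - b / x) =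
      ENNReal.ofReal a * ∫⁻ x in Ioi 0, f (a * x - b / x) := by
  calc ∫⁻ x in Ioi 0, ENNReal.ofReal (b * (x ^ 2)⁻¹) * f (a * x - b / x)
      = ∫⁻ x in Ioi 0, ENNReal.ofReal b * f (b * x - a / x) := by
        rw [← lintegral_Ioi_comp_inv fun x => ENNReal.ofReal b * f (b * x - a / x)]
        refine lintegral_congr fun x => ?_
        rw [ENNReal.ofReal_mul hb.le, ← hf, mul_comm (ENNReal.ofReal b), mul_assoc, neg_sub,
          div_inv_eq_mul, ← div_eq_mul_inv]
    _ = ∫⁻ x in Ioi 0, ENNReal.ofReal a * f (a * x - b / x) := by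
        rw [← lintegral_Ioi_comp_mul_left (div_pos ha hb)]
        refine lintegral_congr fun x => ?_
        rw [← mul_assoc, ← ENNReal.ofReal_mul (div_pos ha hb).le, div_mul_cancel₀ a hb.ne',
          ← mul_assoc, mul_div_cancel₀ a hb.ne', ← div_div, div_div_cancel₀ ha.ne']
    _ = ENNReal.ofReal a * ∫⁻ x in Ioi 0, f (a * x - b / x) :=
        lintegral_const_mul' _ _ ENNReal.ofReal_ne_top

theorem two_mul_lintegral_Ioi_comp_mul_sub_div {a b : ℝ} (ha : 0 < a) (hb : 0 < b)
    {f : ℝ → ℝ≥0∞} (hf : Measurable f) (hf_even : Function.Even f) :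
    2 * ENNReal.ofReal a * ∫⁻ x in Ioi 0, f (a * x - b / x) = ∫⁻ x, f x := by
  have himage := image_mul_sub_div_Ioi ha hb
  have hderiv : ∀ x ∈ Ioi (0 : ℝ),
      HasDerivWithinAt (fun x => a * x - b / x) (a + b * (x ^ 2)⁻¹) (Ioi 0) x := fun x hx => by
    have := ((hasDerivAt_const_mul a).sub ((hasDerivAt_inv (ne_of_gt hx)).const_mul b))
    exact this.hasDerivWithinAt.congr_deriv (by ring)
  have hinj : InjOn (fun x => a * x - b / x) (Ioi 0) := by
    refine StrictMonoOn.injOn fun x (hx : 0 < x) y _ hxy => ?_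
    gcongr
  symm
  calc ∫⁻ x, f x
      = ∫⁻ x in Ioi 0, ENNReal.ofReal (a + b * (x ^ 2)⁻¹) * f (a * x - b / x) := by
        rw [← setLIntegral_univ, ← himage,
          lintegral_image_eq_lintegral_abs_deriv_mul measurableSet_Ioi hderiv hinj]
        refine lintegral_congr fun x => ?_
        rw [abs_of_pos (by positivity)]
    _ = ∫⁻ x in Ioi 0, (ENNReal.ofReal a * f (a * x - b / x) +
          ENNReal.ofReal (b * (x ^ 2)⁻¹) * f (a * x - b / x)) := by
        refine lintegral_congr fun x => ?_
        rw [ENNReal.ofReal_add ha.le (by positivity), add_mul]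
    _ = 2 * ENNReal.ofReal a * ∫⁻ x in Ioi 0, f (a * x - b / x) := by
        rw [lintegral_add_left (by fun_prop),
          lintegral_Ioi_div_sq_mul_comp_mul_sub_div ha hb hf_even,
          lintegral_const_mul' _ _ ENNReal.ofReal_ne_top]
        ring

theorem two_mul_lintegral_Ioi_inv_pow_mul_exp_neg_div_sq (n : ℕ) {a : ℝ} (ha : 0 < a) :
    2 * ∫⁻ r in Ioi 0, ENNReal.ofReal ((r ^ (n + 2))⁻¹ * Real.exp (-(a / r ^ 2))) =
      ENNReal.ofReal (Real.Gamma ((n + 1) / 2) * a ^ (-(((n : ℝ) + 1) / 2))) := by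
  have hn : (-1 : ℝ) < n := by linarith [(n.cast_nonneg : (0 : ℝ) ≤ n)]
  have hint : IntegrableOn (fun x : ℝ => x ^ (n : ℝ) * Real.exp (-a * x ^ (2 : ℝ))) (Ioi 0) :=
    integrableOn_rpow_mul_exp_neg_mul_rpow hn two_pos ha
  calc 2 * ∫⁻ r in Ioi 0, ENNReal.ofReal ((r ^ (n + 2))⁻¹ * Real.exp (-(a / r ^ 2)))
      = 2 * ∫⁻ x in Ioi 0, ENNReal.ofReal (x ^ (n : ℝ) * Real.exp (-a * x ^ (2 : ℝ))) := by
        rw [← lintegral_Ioi_comp_inv]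
        congr 1
        refine setLIntegral_congr_fun measurableSet_Ioi fun r (hr : 0 < r) => ?_
        rw [← ENNReal.ofReal_mul (by positivity)]
        congr 1
        simp only [Real.rpow_natCast, Real.rpow_two]
        rw [inv_pow, inv_inv, pow_add, inv_pow, div_inv_eq_mul]
        field_simp
    _ = ENNReal.ofReal (2 * (a ^ (-((n : ℝ) + 1) / 2) * (1 / 2) * Real.Gamma ((n + 1) / 2))) := by
        rw [← ofReal_integral_eq_lintegral_ofReal hint, integral_rpow_mul_exp_neg_mul_rpow two_pos
          hn ha, ENNReal.ofReal_mul two_pos.le, ENNReal.ofReal_ofNat]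
        filter_upwards [ae_restrict_mem measurableSet_Ioi] with x hx
        have : 0 < x := hx
        positivity
    _ = _ := by
        congr 1
        ring_nf

end Substitution

section Weight

variable {E : Type*} [NormedAddCommGroup E] [NormedSpace ℝ E]

/-- The weight `(‖y‖² + t²)^{-(n+1)/2}` with `n = dim E`: the Poisson kernel of the half-space
`E × (0, ∞)` is a multiple of `t * poissonWeight t y`. -/
def poissonWeight (t : ℝ) (y : E) : ℝ :=
  (‖y‖ ^ 2 + t ^ 2) ^ (-(((finrank ℝ E : ℝ) + 1) / 2))

theorem poissonWeight_nonneg (t : ℝ) (y : E) : 0 ≤ poissonWeight t y := by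
  unfold poissonWeight
  positivity

theorem rpow_neg_sq_add_sq_le {t s r : ℝ} (ht : 0 < t) (hs : 0 ≤ s) (hr : 0 ≤ r) :
    (r ^ 2 + t ^ 2) ^ (-s) ≤ (1 + (t ^ 2)⁻¹) ^ s * (1 + r) ^ (-(2 * s)) := by
  have hsq : (1 + r) ^ 2 ≤ (1 + (t ^ 2)⁻¹) * (r ^ 2 + t ^ 2) := by
    have : (1 + (t ^ 2)⁻¹) * (r ^ 2 + t ^ 2) = (1 + r) ^ 2 + (t - r / t) ^ 2 := by
      field_simp
      ring
    linarith [sq_nonneg (t - r / t)]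
  calc (r ^ 2 + t ^ 2) ^ (-s)
      ≤ ((1 + (t ^ 2)⁻¹)⁻¹ * (1 + r) ^ 2) ^ (-s) := by
        refine Real.rpow_le_rpow_of_nonpos (by positivity) ?_ (neg_nonpos.2 hs)
        rwa [inv_mul_le_iff₀ (by positivity)]
    _ = (1 + (t ^ 2)⁻¹) ^ s * (1 + r) ^ (-(2 * s)) := by
        rw [Real.mul_rpow (by positivity) (by positivity), Real.rpow_neg (by positivity),
          Real.inv_rpow (by positivity), inv_inv, ← Real.rpow_natCast_mul (by positivity)]
        push_cast
        rw [mul_neg]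

theorem poissonWeight_le {t : ℝ} (ht : 0 < t) (y : E) :
    poissonWeight t y ≤ (1 + (t ^ 2)⁻¹) ^ (((finrank ℝ E : ℝ) + 1) / 2) *
      (1 + ‖y‖) ^ (-((finrank ℝ E : ℝ) + 1)) := by
  have := rpow_neg_sq_add_sq_le ht (by positivity : 0 ≤ ((finrank ℝ E : ℝ) + 1) / 2)
    (norm_nonneg y)
  rwa [mul_div_cancel₀ _ two_ne_zero] at this

theorem gaussHilbertKernel_div_nonneg (ε r : ℝ) : 0 ≤ gaussHilbertKernel ε r / r := by
  rw [gaussHilbertKernel, div_div]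
  exact div_nonneg (Real.exp_nonneg _) (mul_self_nonneg r)

theorem gaussHilbertKernel_div_mul_self (ε r : ℝ) :
    gaussHilbertKernel ε r / r * r = gaussHilbertKernel ε r := by
  rcases eq_or_ne r 0 with rfl | hr
  · simp only [gaussHilbertKernel, div_zero, zero_mul]
  · exact div_mul_cancel₀ _ hr

theorem integral_gaussHilbertKernel (ε : ℝ) : ∫ r, gaussHilbertKernel ε r = 0 := by
  have h := integral_neg_eq_self (gaussHilbertKernel ε) volume
  simp only [gaussHilbertKernel, div_neg, even_two, Even.neg_pow, integral_neg] at h ⊢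
  linarith

theorem ofReal_gamma_mul_poissonWeight {t : ℝ} (ht : 0 < t) (y : E) :
    ENNReal.ofReal (Real.Gamma ((finrank ℝ E + 1) / 2) * poissonWeight t y) =
      2 * ∫⁻ r in Ioi 0, ENNReal.ofReal
        ((r ^ (finrank ℝ E + 2))⁻¹ * Real.exp (-((‖y‖ ^ 2 + t ^ 2) / r ^ 2))) :=
  (two_mul_lintegral_Ioi_inv_pow_mul_exp_neg_div_sq _ (by positivity)).symm

theorem ofReal_gamma_mul_poissonWeight_eq_lintegral {ε : ℝ} (hε : 0 < ε) (y : E) :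
    ENNReal.ofReal (Real.Gamma ((finrank ℝ E + 1) / 2) * poissonWeight ε y) =
      ∫⁻ r : ℝ, ENNReal.ofReal ((|r| ^ finrank ℝ E)⁻¹ *
        (Real.exp (-‖r⁻¹ • y‖ ^ 2) * (gaussHilbertKernel ε r / r))) := by
  rw [ofReal_gamma_mul_poissonWeight hε, lintegral_eq_two_mul_lintegral_Ioi_of_even]
  · congr 1
    refine setLIntegral_congr_fun measurableSet_Ioi fun r (hr : 0 < r) => ?_
    congr 1
    rw [gaussHilbertKernel, norm_smul, norm_inv, Real.norm_eq_abs, abs_of_pos hr, div_div,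
      mul_div_assoc', ← Real.exp_add, add_div, neg_add, div_pow, mul_pow, inv_pow]
    field_simp
    ring
  · intro r
    simp only [gaussHilbertKernel, abs_neg, inv_neg, neg_smul, norm_neg, div_neg, even_two,
      Even.neg_pow, neg_div, neg_neg]

variable [MeasurableSpace E] [BorelSpace E]

theorem measurable_poissonWeight (t : ℝ) : Measurable (poissonWeight t : E → ℝ) := by
  unfold poissonWeight
  fun_prop

variable [FiniteDimensional ℝ E] (μ : Measure E) [μ.IsAddHaarMeasure]

theorem map_smul_withDensity_gaussHilbertKernel {ε : ℝ} (hε : 0 < ε) :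
    ((μ.prod volume).withDensity fun z : E × ℝ =>
      ENNReal.ofReal (Real.exp (-‖z.1‖ ^ 2) * (gaussHilbertKernel ε z.2 / z.2))).map
        (fun z => z.2 • z.1) =
      μ.withDensity fun y =>
        ENNReal.ofReal (Real.Gamma ((finrank ℝ E + 1) / 2) * poissonWeight ε y) := by
  have hκ := measurable_gaussHilbertKernel ε
  refine Measure.ext_of_lintegral _ fun H hH => ?_
  have hw := measurable_poissonWeight (E := E) ε
  rw [lintegral_map hH (by fun_prop), lintegral_withDensity_eq_lintegral_mul _ (by fun_prop)
    (by fun_prop), lintegral_withDensity_eq_lintegral_mul _ (by fun_prop) hH,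
    lintegral_prod_symm _ (by fun_prop)]
  simp only [Pi.mul_apply, ofReal_gamma_mul_poissonWeight_eq_lintegral hε]
  calc _ = ∫⁻ r : ℝ, ∫⁻ y, ENNReal.ofReal ((|r| ^ finrank ℝ E)⁻¹ *
        (Real.exp (-‖r⁻¹ • y‖ ^ 2) * (gaussHilbertKernel ε r / r))) * H y ∂μ := by
        have hr0 : ∀ᵐ r : ℝ, r ≠ 0 := Measure.ae_ne volume 0
        refine lintegral_congr_ae (hr0.mono fun r hr => ?_)
        have := lintegral_comp_smul μ hr fun y =>
          ENNReal.ofReal (Real.exp (-‖r⁻¹ • y‖ ^ 2) * (gaussHilbertKernel ε r / r)) * H y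
        simp only [inv_smul_smul₀ hr] at this
        dsimp only
        rw [this, ← lintegral_const_mul' _ _ ENNReal.ofReal_ne_top]
        simp only [← mul_assoc, ← ENNReal.ofReal_mul (by positivity : 0 ≤ (|r| ^ finrank ℝ E)⁻¹)]
    _ = _ := by
      rw [lintegral_lintegral_swap (by fun_prop)]
      refine lintegral_congr fun y => ?_
      rw [lintegral_mul_const _ (by fun_prop)]

theorem gamma_mul_integral_poissonWeight_mul {ε : ℝ} (hε : 0 < ε) {F : E → ℝ} (hF : Measurable F)
    (hF_int : Integrable (fun y => poissonWeight ε y * F y) μ) :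
    Real.Gamma ((finrank ℝ E + 1) / 2) * ∫ y, poissonWeight ε y * F y ∂μ =
      ∫ v, Real.exp (-‖v‖ ^ 2) * (∫ r, gaussHilbertKernel ε r / r * F (r • v)) ∂μ := by
  set Γ := Real.Gamma ((finrank ℝ E + 1) / 2)
  have hΓ : 0 < Γ := Real.Gamma_pos_of_pos (by positivity)
  have hw := measurable_poissonWeight (E := E) ε
  have hκ := measurable_gaussHilbertKernel ε
  have hmap := map_smul_withDensity_gaussHilbertKernel μ hε
  have hleft (y : E) : (ENNReal.ofReal (Γ * poissonWeight ε y)).toReal • F y =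
      Γ * (poissonWeight ε y * F y) := by
    rw [ENNReal.toReal_ofReal (mul_nonneg hΓ.le (poissonWeight_nonneg ε y)), smul_eq_mul, mul_assoc]
  have hright (z : E × ℝ) :
      (ENNReal.ofReal (Real.exp (-‖z.1‖ ^ 2) * (gaussHilbertKernel ε z.2 / z.2))).toReal •
        F (z.2 • z.1) =
      Real.exp (-‖z.1‖ ^ 2) * (gaussHilbertKernel ε z.2 / z.2 * F (z.2 • z.1)) := by
    rw [ENNReal.toReal_ofReal (mul_nonneg (Real.exp_nonneg _) (gaussHilbertKernel_div_nonneg _ _)),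
      smul_eq_mul, mul_assoc]
  have hint : Integrable F (μ.withDensity fun y => ENNReal.ofReal (Γ * poissonWeight ε y)) := by
    rw [integrable_withDensity_iff_integrable_smul' (by fun_prop) (by simp)]
    simp only [hleft]
    exact hF_int.const_mul Γ
  rw [← hmap, integrable_map_measure hF.aestronglyMeasurable (by fun_prop),
    integrable_withDensity_iff_integrable_smul' (by fun_prop) (by simp)] at hint
  simp only [Function.comp_apply, hright] at hint
  calc Γ * ∫ y, poissonWeight ε y * F y ∂μ
      = ∫ y, F y ∂μ.withDensity fun y => ENNReal.ofReal (Γ * poissonWeight ε y) := by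
        rw [integral_withDensity_eq_integral_toReal_smul (by fun_prop) (by simp)]
        simp only [hleft, integral_const_mul]
    _ = ∫ z, Real.exp (-‖z.1‖ ^ 2) * (gaussHilbertKernel ε z.2 / z.2 * F (z.2 • z.1))
          ∂μ.prod volume := by
        rw [← hmap, integral_map (by fun_prop) hF.aestronglyMeasurable,
          integral_withDensity_eq_integral_toReal_smul (by fun_prop) (by simp)]
        simp only [hright]
    _ = _ := by
        rw [integral_prod _ hint]
        simp only [integral_const_mul]

end Weight

section ConjugatePoissonKernel

open scoped RealInnerProductSpace

variable {E : Type*} [NormedAddCommGroup E] [InnerProductSpace ℝ E]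

/-- The (unnormalised) kernel of the conjugate Poisson integral in the direction `e`; as `t → 0` it
becomes the kernel of the Riesz transform in the direction `e`. -/
def conjugatePoissonKernel (e : E) (t : ℝ) (y : E) : ℝ := ⟪e, y⟫ * poissonWeight t y

theorem abs_conjugatePoissonKernel_le (e : E) {t : ℝ} (ht : 0 < t) (y : E) :
    ‖conjugatePoissonKernel e t y‖ ≤ ‖e‖ * (1 + (t ^ 2)⁻¹) ^ (((finrank ℝ E : ℝ) + 1) / 2) *
      (1 + ‖y‖) ^ (-(finrank ℝ E : ℝ)) := by
  have hy : 0 < 1 + ‖y‖ := by positivity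
  calc ‖conjugatePoissonKernel e t y‖ = ‖⟪e, y⟫‖ * poissonWeight t y := by
        rw [conjugatePoissonKernel, norm_mul, Real.norm_of_nonneg (poissonWeight_nonneg t y)]
    _ ≤ ‖e‖ * (1 + ‖y‖) * ((1 + (t ^ 2)⁻¹) ^ (((finrank ℝ E : ℝ) + 1) / 2) *
          (1 + ‖y‖) ^ (-((finrank ℝ E : ℝ) + 1))) := by
        refine mul_le_mul ((norm_inner_le_norm e y).trans ?_) (poissonWeight_le ht y)
          (poissonWeight_nonneg t y) (by positivity)
        gcongr
        linarith
    _ = _ := by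
        rw [neg_add_rev, Real.rpow_add hy, Real.rpow_neg_one]
        field_simp

variable [MeasurableSpace E] [BorelSpace E]

theorem measurable_conjugatePoissonKernel (e : E) (t : ℝ) :
    Measurable (conjugatePoissonKernel e t) :=
  Measurable.mul (by fun_prop) (measurable_poissonWeight t)

variable [FiniteDimensional ℝ E]

theorem memLp_conjugatePoissonKernel (e : E) {t q : ℝ} (ht : 0 < t) (hq : 1 < q) :
    MemLp (conjugatePoissonKernel e t) (ENNReal.ofReal q) := by
  rcases eq_or_ne e 0 with rfl | he
  · have : conjugatePoissonKernel (0 : E) t = 0 := by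
      ext y
      simp only [conjugatePoissonKernel, inner_zero_left, zero_mul, Pi.zero_apply]
    rw [this]
    exact MemLp.zero
  · have : Nontrivial E := ⟨e, 0, he⟩
    have hn : (0 : ℝ) < finrank ℝ E := mod_cast Module.finrank_pos
    exact memLp_of_norm_le_mul_rpow (one_pos.trans hq) (by nlinarith)
      (measurable_conjugatePoissonKernel e t).aestronglyMeasurable
      (abs_conjugatePoissonKernel_le e ht)

theorem integrable_exp_neg_mul_sq_norm_add_inner {b : ℝ} (hb : 0 < b) (e : E) :
    Integrable fun v => Real.exp (-b * ‖v‖ ^ 2 + ⟪e, v⟫) := by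
  have h := (GaussianFourier.integrable_cexp_neg_mul_sq_norm_add
    (b := (b : ℂ)) (by simpa) 1 e).norm
  simpa only [Complex.norm_exp, one_mul, ← Complex.ofReal_pow, ← Complex.ofReal_neg,
    ← Complex.ofReal_mul, ← Complex.ofReal_add, Complex.ofReal_re] using h

theorem integrable_inner_mul_exp_neg_mul_sq_norm {b : ℝ} (hb : 0 < b) (e : E) :
    Integrable fun v => ⟪e, v⟫ * Real.exp (-b * ‖v‖ ^ 2) := by
  refine ((integrable_exp_neg_mul_sq_norm_add_inner hb e).add
    (integrable_exp_neg_mul_sq_norm_add_inner hb (-e))).mono' (by fun_prop)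
    (Eventually.of_forall fun v => ?_)
  have hexp : |⟪e, v⟫| ≤ Real.exp ⟪e, v⟫ + Real.exp (-⟪e, v⟫) := by
    rw [abs_le]
    constructor <;> linarith [Real.add_one_le_exp ⟪e, v⟫, Real.add_one_le_exp (-⟪e, v⟫),
      Real.exp_pos ⟪e, v⟫, Real.exp_pos (-⟪e, v⟫)]
  calc ‖⟪e, v⟫ * Real.exp (-b * ‖v‖ ^ 2)‖ = |⟪e, v⟫| * Real.exp (-b * ‖v‖ ^ 2) := by
        rw [norm_mul, Real.norm_eq_abs, Real.norm_of_nonneg (Real.exp_nonneg _)]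
    _ ≤ (Real.exp ⟪e, v⟫ + Real.exp (-⟪e, v⟫)) * Real.exp (-b * ‖v‖ ^ 2) := by gcongr
    _ = _ := by
        rw [Pi.add_apply, inner_neg_left, Real.exp_add, Real.exp_add]
        ring

theorem gamma_mul_conjugatePoissonKernel_convolution {ε : ℝ} (hε : 0 < ε) (e : E) {g : E → ℝ}
    (hg : Measurable g) {x : E}
    (hgx : ConvolutionExistsAt (conjugatePoissonKernel e ε) g x (lsmul ℝ ℝ)) :
    Real.Gamma ((finrank ℝ E + 1) / 2) * (conjugatePoissonKernel e ε ⋆ g) x =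
      ∫ v, (⟪e, v⟫ * Real.exp (-1 * ‖v‖ ^ 2)) • ∫ r, gaussHilbertKernel ε r * g (x - r • v) := by
  have hQ (y : E) : conjugatePoissonKernel e ε y * g (x - y) =
      poissonWeight ε y * (⟪e, y⟫ * g (x - y)) := by
    rw [conjugatePoissonKernel]
    ring
  have hpolar := gamma_mul_integral_poissonWeight_mul volume hε
    (F := fun y => ⟪e, y⟫ * g (x - y)) (by fun_prop)
    (by simpa only [ConvolutionExistsAt, lsmul_apply, smul_eq_mul, hQ] using hgx)
  simp only [convolution_lsmul, smul_eq_mul, hQ, hpolar, ← integral_const_mul]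
  refine integral_congr_ae (.of_forall fun v => integral_congr_ae (.of_forall fun r => ?_))
  simp only [real_inner_smul_right, neg_one_mul]
  linear_combination (⟪e, v⟫ * Real.exp (-‖v‖ ^ 2) * g (x - r • v)) *
    gaussHilbertKernel_div_mul_self ε r

theorem exists_convolutionBound_conjugatePoissonKernel {p : ℝ} (hp : 1 < p) (e : E) :
    ∃ C : ℝ≥0, ∀ ε > 0, ConvolutionBound (conjugatePoissonKernel e ε) p C := by
  obtain ⟨C, hC⟩ := exists_convolutionBound_gaussHilbertKernel hp
  have hpq := Real.HolderConjugate.conjExponent hp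
  set Γ := Real.Gamma ((finrank ℝ E + 1) / 2)
  have hΓ : 0 < Γ := Real.Gamma_pos_of_pos (by positivity)
  set w : E → ℝ := fun v => ⟪e, v⟫ * Real.exp (-1 * ‖v‖ ^ 2)
  have hw : Integrable w := integrable_inner_mul_exp_neg_mul_sq_norm one_pos e
  refine ⟨‖Γ⁻¹‖₊ * ((∫⁻ v, ‖w v‖ₑ).toNNReal * C), fun ε hε => ?_⟩
  refine .of_hasCompactSupport hpq (memLp_conjugatePoissonKernel e hε hpq.symm.lt)
    fun g hg hg_supp => ?_
  have hκ := measurable_gaussHilbertKernel ε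
  have hgp : MemLp g (ENNReal.ofReal p) := hg.memLp_of_hasCompactSupport hg_supp
  have hpolar : conjugatePoissonKernel e ε ⋆ g = Γ⁻¹ • fun x =>
      ∫ v, w v • ∫ r, gaussHilbertKernel ε r * g (x - r • v) := by
    ext x
    rw [Pi.smul_apply, smul_eq_mul, eq_inv_mul_iff_mul_eq₀ hΓ.ne']
    exact gamma_mul_conjugatePoissonKernel_convolution hε e hg.measurable
      (convolutionExistsAt_of_memLp hpq (memLp_conjugatePoissonKernel e hε hpq.symm.lt) hgp x)
  have hmeas : Measurable (Function.uncurry fun (x v : E) =>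
      ∫ r, gaussHilbertKernel ε r * g (x - r • v)) := by
    refine StronglyMeasurable.measurable <| StronglyMeasurable.integral_prod_right
      (f := fun (z : E × E) r => gaussHilbertKernel ε r * g (z.1 - r • z.2)) ?_
    exact Measurable.stronglyMeasurable (by fun_prop)
  have hline (v : E) : eLpNorm (fun x => ∫ r, gaussHilbertKernel ε r * g (x - r • v))
      (ENNReal.ofReal p) volume ≤ C * eLpNorm g (ENNReal.ofReal p) volume := by
    rcases eq_or_ne v 0 with rfl | hv
    · simp [integral_mul_const, integral_gaussHilbertKernel]
    · exact eLpNorm_integral_mul_comp_line_le (one_pos.trans hp) hκ (hC ε hε) hv hg hg_supp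
  calc eLpNorm (conjugatePoissonKernel e ε ⋆ g) (ENNReal.ofReal p) volume
      ≤ ‖Γ⁻¹‖ₑ * ((∫⁻ v, ‖w v‖ₑ) * (C * eLpNorm g (ENNReal.ofReal p) volume)) := by
        rw [hpolar, eLpNorm_const_smul]
        gcongr
        exact eLpNorm_integral_smul_le hp.le hw.1 hmeas.aestronglyMeasurable (.of_forall hline)
    _ = ↑(‖Γ⁻¹‖₊ * ((∫⁻ v, ‖w v‖ₑ).toNNReal * C)) * eLpNorm g (ENNReal.ofReal p) volume := by
        rw [ENNReal.coe_mul, ENNReal.coe_mul, ENNReal.coe_toNNReal hw.2.ne, mul_assoc, mul_assoc]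
        rfl

end ConjugatePoissonKernel

section Subordination

theorem lintegral_Ioi_exp_neg_sq_mul_sub_div {a b : ℝ} (ha : 0 < a) (hb : 0 < b) :
    ∫⁻ x in Ioi (0 : ℝ), ENNReal.ofReal (Real.exp (-(a * x - b / x) ^ 2)) =
      ENNReal.ofReal (√Real.pi / (2 * a)) := by
  have hgauss : ∫⁻ x : ℝ, ENNReal.ofReal (Real.exp (-x ^ 2)) = ENNReal.ofReal √Real.pi := by
    have h := integral_gaussian 1
    have hint := integrable_exp_neg_mul_sq one_pos
    simp only [neg_one_mul, div_one] at h hint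
    rw [← h, ofReal_integral_eq_lintegral_ofReal hint (.of_forall fun _ => Real.exp_nonneg _)]
  have hcs := two_mul_lintegral_Ioi_comp_mul_sub_div ha hb
    (f := fun x => ENNReal.ofReal (Real.exp (-x ^ 2))) (by fun_prop)
    (fun x => by simp only [even_two.neg_pow])
  rw [hgauss, ← ENNReal.ofReal_ofNat, ← ENNReal.ofReal_mul zero_le_two] at hcs
  rw [ENNReal.ofReal_div_of_pos (by positivity), ← hcs, mul_comm,
    ENNReal.mul_div_cancel_right (by simpa using ha) ENNReal.ofReal_ne_top]

theorem sqrt_div_mul_mul_exp {x : ℝ} (hx : x ≠ 0) (c s t : ℝ) :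
    √(1 + x ^ 2) / x * (√(1 + x ^ 2) / x * c * (x ^ 2 / (1 + x ^ 2) *
        Real.exp (-((√(1 + x ^ 2) / x * c) ^ 2 * (x ^ 2 * t ^ 2 + s ^ 2))))) =
      c * Real.exp (-(c ^ 2 * (s + t) ^ 2)) * Real.exp (-(c * t * x - c * s / x) ^ 2) := by
  have hsqrt : √(1 + x ^ 2) ^ 2 = 1 + x ^ 2 := Real.sq_sqrt (by positivity)
  have hexp : -((√(1 + x ^ 2) / x * c) ^ 2 * (x ^ 2 * t ^ 2 + s ^ 2)) =
      -(c ^ 2 * (s + t) ^ 2) + -(c * t * x - c * s / x) ^ 2 := by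
    rw [mul_pow, div_pow, hsqrt]
    field_simp
    ring
  rw [hexp, Real.exp_add]
  field_simp
  rw [hsqrt]

theorem lintegral_lintegral_Ioi_exp_mul_comp_mul_div_sqrt {s t : ℝ} (hs : 0 < s) (ht : 0 < t)
    {φ : ℝ → ℝ≥0∞} (hφ : Measurable φ) :
    ∫⁻ v in Ioi (0 : ℝ), ∫⁻ u in Ioi (0 : ℝ), ENNReal.ofReal (u ^ 2 / (u ^ 2 + v ^ 2) *
        Real.exp (-(u ^ 2 * t ^ 2 + v ^ 2 * s ^ 2))) * φ (u * v / √(u ^ 2 + v ^ 2)) =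
      ENNReal.ofReal (√Real.pi / (2 * t)) *
        ∫⁻ c in Ioi (0 : ℝ), ENNReal.ofReal (Real.exp (-(c ^ 2 * (s + t) ^ 2))) * φ c := by
  calc _ = ∫⁻ v in Ioi (0 : ℝ), ∫⁻ x in Ioi (0 : ℝ), ENNReal.ofReal (v * (x ^ 2 / (1 + x ^ 2) *
          Real.exp (-(v ^ 2 * (x ^ 2 * t ^ 2 + s ^ 2))))) * φ (v * (x / √(1 + x ^ 2))) := by
        refine setLIntegral_congr_fun measurableSet_Ioi fun v (hv : 0 < v) => ?_
        rw [← lintegral_Ioi_comp_mul_left hv]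
        refine setLIntegral_congr_fun measurableSet_Ioi fun x (hx : 0 < x) => ?_
        have hsq : (v * x) ^ 2 + v ^ 2 = v ^ 2 * (1 + x ^ 2) := by ring
        rw [← mul_assoc, ← ENNReal.ofReal_mul hv.le, hsq, Real.sqrt_mul (by positivity),
          Real.sqrt_sq hv.le]
        congr 3 <;> field_simp
    _ = ∫⁻ x in Ioi (0 : ℝ), ∫⁻ v in Ioi (0 : ℝ), ENNReal.ofReal (v * (x ^ 2 / (1 + x ^ 2) *
          Real.exp (-(v ^ 2 * (x ^ 2 * t ^ 2 + s ^ 2))))) * φ (v * (x / √(1 + x ^ 2))) :=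
        lintegral_lintegral_swap (by fun_prop)
    _ = ∫⁻ x in Ioi (0 : ℝ), ∫⁻ c in Ioi (0 : ℝ), ENNReal.ofReal (c * Real.exp
          (-(c ^ 2 * (s + t) ^ 2)) * Real.exp (-(c * t * x - c * s / x) ^ 2)) * φ c := by
        refine setLIntegral_congr_fun measurableSet_Ioi fun x (hx : 0 < x) => ?_
        rw [← lintegral_Ioi_comp_mul_left (by positivity : 0 < √(1 + x ^ 2) / x)]
        refine setLIntegral_congr_fun measurableSet_Ioi fun c (hc : 0 < c) => ?_
        rw [← mul_assoc, ← ENNReal.ofReal_mul (by positivity), sqrt_div_mul_mul_exp hx.ne']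
        congr 2
        field_simp
    _ = ∫⁻ c in Ioi (0 : ℝ), ∫⁻ x in Ioi (0 : ℝ), ENNReal.ofReal (c * Real.exp
          (-(c ^ 2 * (s + t) ^ 2)) * Real.exp (-(c * t * x - c * s / x) ^ 2)) * φ c :=
        lintegral_lintegral_swap (by fun_prop)
    _ = _ := by
        rw [← lintegral_const_mul' _ _ ENNReal.ofReal_ne_top]
        refine setLIntegral_congr_fun measurableSet_Ioi fun c (hc : 0 < c) => ?_
        rw [lintegral_mul_const _ (by fun_prop)]
        simp only [ENNReal.ofReal_mul (mul_nonneg hc.le (Real.exp_nonneg _))]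
        rw [lintegral_const_mul' _ _ ENNReal.ofReal_ne_top,
          lintegral_Ioi_exp_neg_sq_mul_sub_div (by positivity) (by positivity),
          ← ENNReal.ofReal_mul (by positivity), ← mul_assoc (ENNReal.ofReal _),
          ← ENNReal.ofReal_mul (by positivity)]
        congr 2
        field_simp

end Subordination

section GaussianComponent

variable {E : Type*} [NormedAddCommGroup E] [NormedSpace ℝ E]

/-- The Gaussian with inverse width `u` in the decomposition
`Γ((n+1)/2) * poissonWeight t y = ∫ u in Ioi 0, gaussianComponent t u y`. -/
def gaussianComponent (t u : ℝ) (y : E) : ℝ :=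
  2 * (u ^ finrank ℝ E * Real.exp (-(u ^ 2 * (‖y‖ ^ 2 + t ^ 2))))

theorem integrableOn_gaussianComponent {t : ℝ} (ht : 0 < t) (y : E) :
    IntegrableOn (fun u => gaussianComponent t u y) (Ioi 0) := by
  have h := integrableOn_rpow_mul_exp_neg_mul_sq (by positivity : 0 < ‖y‖ ^ 2 + t ^ 2)
    (neg_one_lt_zero.trans_le (Nat.cast_nonneg (α := ℝ) (finrank ℝ E)))
  simp only [Real.rpow_natCast, neg_mul, mul_comm (_ + _)] at h
  exact h.const_mul 2

theorem integral_gaussianComponent {t : ℝ} (ht : 0 < t) (y : E) :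
    ∫ u in Ioi 0, gaussianComponent t u y =
      Real.Gamma ((finrank ℝ E + 1) / 2) * poissonWeight t y := by
  have h := integral_rpow_mul_exp_neg_mul_rpow two_pos
    (neg_one_lt_zero.trans_le (Nat.cast_nonneg (α := ℝ) (finrank ℝ E)))
    (by positivity : 0 < ‖y‖ ^ 2 + t ^ 2)
  simp only [Real.rpow_natCast, Real.rpow_ofNat] at h
  simp only [gaussianComponent, integral_const_mul, mul_comm (_ ^ 2) (_ + _), ← neg_mul, h,
    poissonWeight, neg_div]
  ring

theorem gaussianComponent_nonneg (t : ℝ) {u : ℝ} (hu : 0 ≤ u) (y : E) :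
    0 ≤ gaussianComponent t u y := by
  unfold gaussianComponent
  positivity

theorem integral_norm_gaussianComponent {t : ℝ} (ht : 0 < t) (y : E) :
    ∫ u in Ioi 0, ‖gaussianComponent t u y‖ =
      Real.Gamma ((finrank ℝ E + 1) / 2) * poissonWeight t y := by
  rw [← integral_gaussianComponent ht]
  exact setIntegral_congr_fun measurableSet_Ioi fun u (hu : 0 < u) =>
    Real.norm_of_nonneg (gaussianComponent_nonneg t hu.le y)

theorem ae_pos_and_pos_prod_restrict_Ioi :
    ∀ᵐ z : ℝ × ℝ ∂(volume.restrict (Ioi 0)).prod (volume.restrict (Ioi 0)), 0 < z.1 ∧ 0 < z.2 :=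
  have hpos : ∀ᵐ u : ℝ ∂volume.restrict (Ioi 0), 0 < u := ae_restrict_mem measurableSet_Ioi
  (Measure.quasiMeasurePreserving_fst.ae hpos).and (Measure.quasiMeasurePreserving_snd.ae hpos)

theorem integral_exp_mul_comp_mul_div_sqrt {s t : ℝ} (hs : 0 < s) (ht : 0 < t) (x : E) :
    ∫ z : ℝ × ℝ, z.2 ^ 2 / (z.2 ^ 2 + z.1 ^ 2) *
        Real.exp (-(z.2 ^ 2 * t ^ 2 + z.1 ^ 2 * s ^ 2)) *
        ((z.2 * z.1 / √(z.2 ^ 2 + z.1 ^ 2)) ^ finrank ℝ E *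
          Real.exp (-((z.2 * z.1 / √(z.2 ^ 2 + z.1 ^ 2)) ^ 2 * ‖x‖ ^ 2)))
        ∂(volume.restrict (Ioi 0)).prod (volume.restrict (Ioi 0)) =
      √Real.pi / (4 * t) * (Real.Gamma ((finrank ℝ E + 1) / 2) * poissonWeight (s + t) x) := by
  have hst : 0 < s + t := add_pos hs ht
  have hcomp (c : ℝ) : Real.exp (-(c ^ 2 * (s + t) ^ 2)) *
      (c ^ finrank ℝ E * Real.exp (-(c ^ 2 * ‖x‖ ^ 2))) = gaussianComponent (s + t) c x / 2 := by
    rw [gaussianComponent, mul_add (c ^ 2), neg_add, Real.exp_add]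
    ring
  rw [integral_eq_lintegral_of_nonneg_ae]
  · have h := lintegral_lintegral_Ioi_exp_mul_comp_mul_div_sqrt hs ht (φ := fun c =>
      ENNReal.ofReal (c ^ finrank ℝ E * Real.exp (-(c ^ 2 * ‖x‖ ^ 2)))) (by fun_prop)
    simp only [← ENNReal.ofReal_mul (Real.exp_nonneg _), hcomp] at h
    rw [lintegral_prod _ (by fun_prop)]
    simp only [ENNReal.ofReal_mul (mul_nonneg (div_nonneg (sq_nonneg _)
      (add_nonneg (sq_nonneg _) (sq_nonneg _))) (Real.exp_nonneg _)), h]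
    rw [← ofReal_integral_eq_lintegral_ofReal ((integrableOn_gaussianComponent hst x).div_const 2)
      ((ae_restrict_mem measurableSet_Ioi).mono fun c (hc : 0 < c) =>
        div_nonneg (gaussianComponent_nonneg _ hc.le x) zero_le_two), integral_div,
      integral_gaussianComponent hst, ENNReal.toReal_mul, ENNReal.toReal_ofReal (by positivity),
      ENNReal.toReal_ofReal (div_nonneg (mul_nonneg (Real.Gamma_nonneg_of_nonneg (by positivity))
        (poissonWeight_nonneg _ _)) zero_le_two)]
    ring
  · filter_upwards [ae_pos_and_pos_prod_restrict_Ioi] with z hz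
    have := hz.1
    have := hz.2
    dsimp only [Pi.zero_apply]
    positivity
  · fun_prop

end GaussianComponent

section GaussianConvolution

open scoped RealInnerProductSpace

variable {E : Type*} [NormedAddCommGroup E] [InnerProductSpace ℝ E]

theorem mul_norm_sq_add_mul_norm_sub_sq {α β : ℝ} (h : α + β ≠ 0) (x z : E) :
    α * ‖z + (β / (α + β)) • x‖ ^ 2 + β * ‖x - (z + (β / (α + β)) • x)‖ ^ 2 =
      (α + β) * ‖z‖ ^ 2 + α * β / (α + β) * ‖x‖ ^ 2 := by
  have hx : x - (z + (β / (α + β)) • x) = (α / (α + β)) • x - z := by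
    rw [show α / (α + β) = 1 - β / (α + β) by field_simp; ring, sub_smul, one_smul]
    abel
  rw [hx, norm_add_sq_real, norm_sub_sq_real, norm_smul, norm_smul, real_inner_smul_left,
    real_inner_smul_right, mul_pow, mul_pow, Real.norm_eq_abs, Real.norm_eq_abs, sq_abs, sq_abs,
    real_inner_comm]
  field_simp
  ring

variable [FiniteDimensional ℝ E] [MeasurableSpace E] [BorelSpace E]

theorem integrable_exp_neg_mul_sq_norm {b : ℝ} (hb : 0 < b) :
    Integrable fun v : E => Real.exp (-b * ‖v‖ ^ 2) := by
  simpa only [inner_zero_left, add_zero] using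
    integrable_exp_neg_mul_sq_norm_add_inner hb (0 : E)

theorem integral_inner_mul_exp_neg_mul_sq_norm (b : ℝ) (e : E) :
    ∫ v, ⟪e, v⟫ * Real.exp (-b * ‖v‖ ^ 2) = 0 := by
  have h := integral_neg_eq_self (fun v => ⟪e, v⟫ * Real.exp (-b * ‖v‖ ^ 2)) volume
  simp only [inner_neg_right, norm_neg, neg_mul ⟪e, _⟫, integral_neg] at h
  linarith

theorem integral_exp_mul_inner_sub_mul_exp {α β : ℝ} (hα : 0 < α) (hβ : 0 < β) (e x : E) :
    ∫ y, Real.exp (-α * ‖y‖ ^ 2) * (⟪e, x - y⟫ * Real.exp (-β * ‖x - y‖ ^ 2)) =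
      ⟪e, x⟫ * (α / (α + β) * (Real.pi / (α + β)) ^ (finrank ℝ E / 2 : ℝ) *
        Real.exp (-(α * β / (α + β)) * ‖x‖ ^ 2)) := by
  have hαβ : 0 < α + β := add_pos hα hβ
  have hshift (z : E) : Real.exp (-α * ‖z + (β / (α + β)) • x‖ ^ 2) *
      (⟪e, x - (z + (β / (α + β)) • x)⟫ *
        Real.exp (-β * ‖x - (z + (β / (α + β)) • x)‖ ^ 2)) =
      Real.exp (-(α * β / (α + β)) * ‖x‖ ^ 2) * (α / (α + β) * ⟪e, x⟫ *
        Real.exp (-(α + β) * ‖z‖ ^ 2) - ⟪e, z⟫ * Real.exp (-(α + β) * ‖z‖ ^ 2)) := by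
    have hexp : Real.exp (-α * ‖z + (β / (α + β)) • x‖ ^ 2) *
        Real.exp (-β * ‖x - (z + (β / (α + β)) • x)‖ ^ 2) =
        Real.exp (-(α * β / (α + β)) * ‖x‖ ^ 2) * Real.exp (-(α + β) * ‖z‖ ^ 2) := by
      rw [← Real.exp_add, ← Real.exp_add]
      congr 1
      linear_combination -mul_norm_sq_add_mul_norm_sub_sq hαβ.ne' x z
    have hinner : ⟪e, x - (z + (β / (α + β)) • x)⟫ = α / (α + β) * ⟪e, x⟫ - ⟪e, z⟫ := by
      rw [inner_sub_right, inner_add_right, real_inner_smul_right]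
      field_simp
      ring
    rw [hinner]
    linear_combination (α / (α + β) * ⟪e, x⟫ - ⟪e, z⟫) * hexp
  rw [← integral_add_right_eq_self _ ((β / (α + β)) • x)]
  simp only [hshift]
  rw [integral_const_mul, integral_sub ((integrable_exp_neg_mul_sq_norm hαβ).const_mul _)
    (integrable_inner_mul_exp_neg_mul_sq_norm hαβ e), integral_inner_mul_exp_neg_mul_sq_norm,
    integral_const_mul, GaussianFourier.integral_rexp_neg_mul_sq_norm hαβ]
  ring

theorem integral_gaussianComponent_mul {u v : ℝ} (hu : 0 < u) (hv : 0 < v) (s t : ℝ) (e x : E) :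
    ∫ y, gaussianComponent t u y * (⟪e, x - y⟫ * gaussianComponent s v (x - y)) =
      ⟪e, x⟫ * (4 * Real.pi ^ (finrank ℝ E / 2 : ℝ) * (u ^ 2 / (u ^ 2 + v ^ 2) *
        Real.exp (-(u ^ 2 * t ^ 2 + v ^ 2 * s ^ 2)) * ((u * v / √(u ^ 2 + v ^ 2)) ^ finrank ℝ E *
          Real.exp (-((u * v / √(u ^ 2 + v ^ 2)) ^ 2 * ‖x‖ ^ 2))))) := by
  have hsplit (y : E) : gaussianComponent t u y *
      (⟪e, x - y⟫ * gaussianComponent s v (x - y)) =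
      4 * (u * v) ^ finrank ℝ E * Real.exp (-(u ^ 2 * t ^ 2 + v ^ 2 * s ^ 2)) *
        (Real.exp (-u ^ 2 * ‖y‖ ^ 2) * (⟪e, x - y⟫ * Real.exp (-v ^ 2 * ‖x - y‖ ^ 2))) := by
    have hexp : Real.exp (-(u ^ 2 * (‖y‖ ^ 2 + t ^ 2))) *
        Real.exp (-(v ^ 2 * (‖x - y‖ ^ 2 + s ^ 2))) =
        Real.exp (-(u ^ 2 * t ^ 2 + v ^ 2 * s ^ 2)) *
          (Real.exp (-u ^ 2 * ‖y‖ ^ 2) * Real.exp (-v ^ 2 * ‖x - y‖ ^ 2)) := by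
      simp only [← Real.exp_add]
      congr 1
      ring
    rw [gaussianComponent, gaussianComponent, mul_pow]
    linear_combination 4 * u ^ finrank ℝ E * v ^ finrank ℝ E * ⟪e, x - y⟫ * hexp
  have hpow : (Real.pi / (u ^ 2 + v ^ 2)) ^ (finrank ℝ E / 2 : ℝ) =
      Real.pi ^ (finrank ℝ E / 2 : ℝ) / √(u ^ 2 + v ^ 2) ^ finrank ℝ E := by
    rw [Real.div_rpow Real.pi_nonneg (by positivity), Real.sqrt_eq_rpow,
      ← Real.rpow_mul_natCast (by positivity), one_div_mul_eq_div]
  simp only [hsplit]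
  rw [integral_const_mul, integral_exp_mul_inner_sub_mul_exp (by positivity) (by positivity),
    hpow, div_pow (u * v), div_pow (u * v), Real.sq_sqrt (by positivity), mul_pow u v 2]
  field_simp

theorem memLp_poissonWeight {t q : ℝ} (ht : 0 < t) (hq : 1 ≤ q) :
    MemLp (poissonWeight t : E → ℝ) (ENNReal.ofReal q) := by
  have ha : (finrank ℝ E : ℝ) < (finrank ℝ E + 1) * q := by nlinarith
  exact memLp_of_norm_le_mul_rpow (one_pos.trans_le hq) ha
    (measurable_poissonWeight t).aestronglyMeasurable fun y =>
      (Real.norm_of_nonneg (poissonWeight_nonneg t y)).trans_le (poissonWeight_le ht y)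

theorem convolutionExistsAt_poissonWeight_conjugatePoissonKernel {s t : ℝ} (hs : 0 < s)
    (ht : 0 < t) (e x : E) :
    ConvolutionExistsAt (poissonWeight t) (conjugatePoissonKernel e s) x (lsmul ℝ ℝ) :=
  convolutionExistsAt_of_memLp Real.HolderConjugate.two_two
    (memLp_poissonWeight ht one_le_two) (memLp_conjugatePoissonKernel e hs one_lt_two) x

theorem integrable_gaussianComponent_mul {s t : ℝ} (hs : 0 < s) (ht : 0 < t) (e x : E) :
    Integrable (fun w : E × ℝ × ℝ => gaussianComponent t w.2.2 w.1 *
      (⟪e, x - w.1⟫ * gaussianComponent s w.2.1 (x - w.1)))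
      (volume.prod ((volume.restrict (Ioi 0)).prod (volume.restrict (Ioi 0)))) := by
  have hmeas : AEStronglyMeasurable (fun w : E × ℝ × ℝ => gaussianComponent t w.2.2 w.1 *
      (⟪e, x - w.1⟫ * gaussianComponent s w.2.1 (x - w.1)))
      (volume.prod ((volume.restrict (Ioi 0)).prod (volume.restrict (Ioi 0)))) := by
    unfold gaussianComponent
    fun_prop
  rw [integrable_prod_iff hmeas]
  constructor
  · refine .of_forall fun y => ?_
    simp only [mul_comm (gaussianComponent t _ y)]
    exact ((integrableOn_gaussianComponent hs (x - y)).const_mul ⟪e, x - y⟫).mul_prod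
      (integrableOn_gaussianComponent ht y)
  · have h := ((convolutionExistsAt_poissonWeight_conjugatePoissonKernel hs ht e x).norm).const_mul
      (Real.Gamma ((finrank ℝ E + 1) / 2) ^ 2)
    refine h.congr (.of_forall fun y => ?_)
    simp only [norm_mul, mul_comm ‖gaussianComponent t _ y‖]
    rw [integral_prod_mul (fun v => ‖⟪e, x - y⟫‖ * ‖gaussianComponent s v (x - y)‖)
      (fun u => ‖gaussianComponent t u y‖), integral_const_mul,
      integral_norm_gaussianComponent hs, integral_norm_gaussianComponent ht]
    simp only [lsmul_apply, smul_eq_mul, conjugatePoissonKernel, norm_mul,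
      Real.norm_of_nonneg (poissonWeight_nonneg _ _)]
    ring

theorem poissonWeight_convolution_conjugatePoissonKernel {s t : ℝ} (hs : 0 < s) (ht : 0 < t)
    (e x : E) :
    Real.Gamma ((finrank ℝ E + 1) / 2) * (t * (poissonWeight t ⋆ conjugatePoissonKernel e s) x) =
      Real.pi ^ (((finrank ℝ E : ℝ) + 1) / 2) * conjugatePoissonKernel e (s + t) x := by
  set Γ := Real.Gamma ((finrank ℝ E + 1) / 2)
  set ν : Measure ℝ := volume.restrict (Ioi 0)
  have hΓ : 0 < Γ := Real.Gamma_pos_of_pos (by positivity)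
  have hmix : Γ * (Γ * (poissonWeight t ⋆ conjugatePoissonKernel e s) x) =
      ∫ y, ∫ z, gaussianComponent t z.2 y *
        (⟪e, x - y⟫ * gaussianComponent s z.1 (x - y)) ∂ν.prod ν := by
    rw [convolution_lsmul, ← integral_const_mul, ← integral_const_mul]
    refine integral_congr_ae (.of_forall fun y => ?_)
    simp only [mul_comm (gaussianComponent t _ y)]
    rw [integral_prod_mul (fun v => ⟪e, x - y⟫ * gaussianComponent s v (x - y))
      (fun u => gaussianComponent t u y), integral_const_mul, integral_gaussianComponent hs,
      integral_gaussianComponent ht, conjugatePoissonKernel]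
    simp only [smul_eq_mul]
    ring
  have hfubini : ∫ y, ∫ z, gaussianComponent t z.2 y *
        (⟪e, x - y⟫ * gaussianComponent s z.1 (x - y)) ∂ν.prod ν =
      ⟪e, x⟫ * (4 * Real.pi ^ (finrank ℝ E / 2 : ℝ) * (√Real.pi / (4 * t) *
        (Γ * poissonWeight (s + t) x))) := by
    rw [integral_integral_swap (integrable_gaussianComponent_mul hs ht e x),
      ← integral_exp_mul_comp_mul_div_sqrt hs ht, ← integral_const_mul, ← integral_const_mul]
    exact integral_congr_ae (ae_pos_and_pos_prod_restrict_Ioi.mono fun z hz =>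
      integral_gaussianComponent_mul hz.2 hz.1 s t e x)
  rw [hfubini] at hmix
  refine mul_left_cancel₀ hΓ.ne' ?_
  rw [mul_left_comm Γ t, mul_left_comm Γ t, hmix, add_div, Real.rpow_add Real.pi_pos,
    Real.sqrt_eq_rpow, conjugatePoissonKernel]
  field_simp

end GaussianConvolution

section PoissonDerivatives

open scoped RealInnerProductSpace

variable {E : Type*} [NormedAddCommGroup E] [InnerProductSpace ℝ E]

/-- The normal derivative `∂_t (t w_t)` of the unnormalized Poisson kernel `t w_t`, where
`w_t = poissonWeight t`. -/
def normalPoissonKernel (t : ℝ) (y : E) : ℝ :=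
  (1 - (finrank ℝ E + 1) * t ^ 2 / (‖y‖ ^ 2 + t ^ 2)) * poissonWeight t y

/-- The gradient in `y` of the unnormalized Poisson kernel `t w_t`, where
`w_t = poissonWeight t`. -/
def tangentialPoissonKernel (t : ℝ) (y : E) : E →L[ℝ] ℝ :=
  (-((finrank ℝ E + 1) * t / (‖y‖ ^ 2 + t ^ 2)) * poissonWeight t y) • innerSL ℝ y

theorem tangentialPoissonKernel_apply (t : ℝ) (y e : E) : tangentialPoissonKernel t y e =
    -((finrank ℝ E + 1) * t / (‖y‖ ^ 2 + t ^ 2)) * poissonWeight t y * ⟪y, e⟫ :=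
  rfl

variable {t : ℝ}

theorem hasDerivAt_poissonWeight (ht : 0 < t) (y : E) :
    HasDerivAt (fun τ => poissonWeight τ y)
      (-((finrank ℝ E + 1) * t / (‖y‖ ^ 2 + t ^ 2)) * poissonWeight t y) t := by
  have hbase : HasDerivAt (fun τ : ℝ => ‖y‖ ^ 2 + τ ^ 2) (2 * t) t := by
    simpa only [Nat.cast_ofNat, Nat.add_one_sub_one, pow_one] using
      (hasDerivAt_pow 2 t).const_add (‖y‖ ^ 2)
  refine (hbase.rpow_const (p := -((finrank ℝ E + 1 : ℝ) / 2))
    (.inl (by positivity))).congr_deriv ?_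
  rw [Real.rpow_sub_one (by positivity), poissonWeight]
  ring

theorem hasFDerivAt_poissonWeight (ht : 0 < t) (y : E) :
    HasFDerivAt (poissonWeight t)
      ((-((finrank ℝ E + 1) / (‖y‖ ^ 2 + t ^ 2)) * poissonWeight t y) • innerSL ℝ y) y := by
  refine (((hasStrictFDerivAt_norm_sq y).hasFDerivAt.add_const (t ^ 2)).rpow_const
    (p := -((finrank ℝ E + 1 : ℝ) / 2)) (.inl (by positivity))).congr_fderiv ?_
  rw [Real.rpow_sub_one (by positivity), poissonWeight, ← Nat.cast_smul_eq_nsmul ℝ, smul_smul]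
  congr 1
  push_cast
  ring

theorem hasDerivAt_mul_poissonWeight (ht : 0 < t) (y : E) :
    HasDerivAt (fun τ => τ * poissonWeight τ y) (normalPoissonKernel t y) t := by
  refine ((hasDerivAt_id t).mul (hasDerivAt_poissonWeight ht y)).congr_deriv ?_
  rw [normalPoissonKernel, id]
  ring

theorem hasFDerivAt_mul_poissonWeight (ht : 0 < t) (y : E) :
    HasFDerivAt (fun z => t * poissonWeight t z) (tangentialPoissonKernel t y) y := by
  refine ((hasFDerivAt_poissonWeight ht y).const_mul t).congr_fderiv ?_
  rw [tangentialPoissonKernel, smul_smul]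
  congr 1
  ring

theorem hasDerivAt_conjugatePoissonKernel (ht : 0 < t) (e y : E) :
    HasDerivAt (fun τ => conjugatePoissonKernel e τ y) (tangentialPoissonKernel t y e) t := by
  refine ((hasDerivAt_poissonWeight ht y).const_mul ⟪e, y⟫).congr_deriv ?_
  rw [tangentialPoissonKernel_apply, real_inner_comm, mul_comm]

theorem hasFDerivAt_conjugatePoissonKernel (ht : 0 < t) (e y : E) :
    HasFDerivAt (conjugatePoissonKernel e t)
      (⟪e, y⟫ • (-((finrank ℝ E + 1) / (‖y‖ ^ 2 + t ^ 2)) * poissonWeight t y) • innerSL ℝ y +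
        poissonWeight t y • innerSL ℝ e) y :=
  (innerSL ℝ e).hasFDerivAt.mul (hasFDerivAt_poissonWeight ht y)

theorem sum_fderiv_conjugatePoissonKernel {ι : Type*} [Fintype ι] (b : OrthonormalBasis ι ℝ E)
    (ht : 0 < t) (y : E) :
    ∑ i, fderiv ℝ (conjugatePoissonKernel (b i) t) y (b i) = -normalPoissonKernel t y := by
  have hsum : ∑ i, ⟪b i, y⟫ ^ 2 = ‖y‖ ^ 2 := by
    simpa only [Real.norm_eq_abs, sq_abs] using b.sum_sq_norm_inner_right y
  have hterm (i : ι) : fderiv ℝ (conjugatePoissonKernel (b i) t) y (b i) = poissonWeight t y -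
      (finrank ℝ E + 1) / (‖y‖ ^ 2 + t ^ 2) * poissonWeight t y * ⟪b i, y⟫ ^ 2 := by
    rw [(hasFDerivAt_conjugatePoissonKernel ht (b i) y).fderiv]
    simp only [add_apply, smul_apply, innerSL_apply_apply,
      smul_eq_mul, real_inner_self_eq_norm_sq, b.norm_eq_one, real_inner_comm (b i) y]
    ring
  simp only [hterm]
  rw [Finset.sum_sub_distrib, ← Finset.mul_sum, hsum, Finset.sum_const, Finset.card_univ,
    ← Module.finrank_eq_card_basis b.toBasis, nsmul_eq_mul, normalPoissonKernel]
  field_simp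
  ring

theorem abs_normalPoissonKernel_le (ht : 0 < t) (y : E) :
    |normalPoissonKernel t y| ≤ (finrank ℝ E + 1) * poissonWeight t y := by
  rw [normalPoissonKernel, abs_mul, abs_of_nonneg (poissonWeight_nonneg t y)]
  refine mul_le_mul_of_nonneg_right ?_ (poissonWeight_nonneg t y)
  have hratio : t ^ 2 / (‖y‖ ^ 2 + t ^ 2) ≤ 1 := by
    rw [div_le_one (by positivity)]
    exact le_add_of_nonneg_left (sq_nonneg _)
  have hn : (0 : ℝ) ≤ finrank ℝ E := Nat.cast_nonneg _
  have hle := mul_le_mul_of_nonneg_left hratio (add_nonneg hn zero_le_one)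
  have hnonneg : 0 ≤ (finrank ℝ E + 1) * (t ^ 2 / (‖y‖ ^ 2 + t ^ 2)) := by positivity
  rw [mul_div_assoc, abs_le]
  constructor <;> linarith

theorem norm_tangentialPoissonKernel_le (ht : 0 < t) (y : E) :
    ‖tangentialPoissonKernel t y‖ ≤ (finrank ℝ E + 1) * poissonWeight t y := by
  have hratio : t * ‖y‖ / (‖y‖ ^ 2 + t ^ 2) ≤ 1 := by
    rw [div_le_one (by positivity)]
    nlinarith [sq_nonneg (‖y‖ - t), sq_nonneg (‖y‖ + t)]
  calc ‖tangentialPoissonKernel t y‖ =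
        (finrank ℝ E + 1) * poissonWeight t y * (t * ‖y‖ / (‖y‖ ^ 2 + t ^ 2)) := by
        rw [tangentialPoissonKernel, norm_smul, innerSL_apply_norm, norm_mul, norm_neg,
          Real.norm_of_nonneg (by positivity), Real.norm_of_nonneg (poissonWeight_nonneg t y)]
        ring
    _ ≤ _ := mul_le_of_le_one_right
        (mul_nonneg (by positivity) (poissonWeight_nonneg t y)) hratio

theorem abs_tangentialPoissonKernel_apply_le (e : E) (ht : 0 < t) (y : E) :
    |tangentialPoissonKernel t y e| ≤ (finrank ℝ E + 1) * ‖e‖ * poissonWeight t y :=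
  ((tangentialPoissonKernel t y).le_of_opNorm_le (norm_tangentialPoissonKernel_le ht y) e).trans_eq
    (mul_right_comm _ _ _)

theorem poissonWeight_anti {s : ℝ} (hs : 0 < s) (hst : s ≤ t) (y : E) :
    poissonWeight t y ≤ poissonWeight s y :=
  Real.rpow_le_rpow_of_nonpos (by positivity) (by gcongr) (neg_nonpos.2 (by positivity))

theorem continuousAt_normalPoissonKernel (ht : 0 < t) (y : E) :
    ContinuousAt (fun τ => normalPoissonKernel τ y) t := by
  have h := (hasDerivAt_poissonWeight ht y).continuousAt
  have hpos : ‖y‖ ^ 2 + t ^ 2 ≠ 0 := by positivity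
  unfold normalPoissonKernel
  fun_prop (disch := assumption)

theorem continuousAt_tangentialPoissonKernel_apply (ht : 0 < t) (y e : E) :
    ContinuousAt (fun τ => tangentialPoissonKernel τ y e) t := by
  have h := (hasDerivAt_poissonWeight ht y).continuousAt
  have hpos : ‖y‖ ^ 2 + t ^ 2 ≠ 0 := by positivity
  simp only [tangentialPoissonKernel_apply]
  fun_prop (disch := assumption)

theorem continuous_tangentialPoissonKernel (ht : 0 < t) :
    Continuous (tangentialPoissonKernel t : E → E →L[ℝ] ℝ) := by
  have h : Continuous (poissonWeight t : E → ℝ) :=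
    continuous_iff_continuousAt.2 fun y => (hasFDerivAt_poissonWeight ht y).continuousAt
  have hpos (y : E) : ‖y‖ ^ 2 + t ^ 2 ≠ 0 := by positivity
  unfold tangentialPoissonKernel
  fun_prop (disch := assumption)

theorem poissonWeight_le_of_norm_sub_le (ht : 0 < t) {y z : E} (h : ‖z - y‖ ≤ t) :
    poissonWeight t z ≤ 3 ^ ((finrank ℝ E + 1 : ℝ) / 2) * poissonWeight t y := by
  have htri : ‖y‖ ≤ ‖z‖ + t := (norm_le_insert z y).trans (by gcongr)
  have hsq : (‖y‖ ^ 2 + t ^ 2) / 3 ≤ ‖z‖ ^ 2 + t ^ 2 := by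
    nlinarith [norm_nonneg y, norm_nonneg z, sq_nonneg (‖z‖ - t)]
  refine (Real.rpow_le_rpow_of_nonpos (by positivity) hsq
    (neg_nonpos.2 (by positivity))).trans_eq ?_
  rw [Real.div_rpow (by positivity) (by norm_num), Real.rpow_neg zero_le_three, div_inv_eq_mul,
    mul_comm, poissonWeight]

theorem norm_tangentialPoissonKernel_le_of_mem_ball (ht : 0 < t) {x z : E}
    (hz : z ∈ Metric.ball x t) (y : E) : ‖tangentialPoissonKernel t (z - y)‖ ≤
      (finrank ℝ E + 1) * (3 ^ ((finrank ℝ E + 1 : ℝ) / 2) * poissonWeight t (x - y)) := by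
  refine (norm_tangentialPoissonKernel_le ht _).trans ?_
  gcongr
  refine poissonWeight_le_of_norm_sub_le ht ?_
  rw [sub_sub_sub_cancel_right]
  exact (mem_ball_iff_norm.1 hz).le

theorem measurable_normalPoissonKernel [MeasurableSpace E] [BorelSpace E] (t : ℝ) :
    Measurable (normalPoissonKernel t : E → ℝ) := by
  have h := measurable_poissonWeight (E := E) t
  unfold normalPoissonKernel
  fun_prop

end PoissonDerivatives

section PoissonConvolution

variable {E F : Type*} [NormedAddCommGroup E] [InnerProductSpace ℝ E] [FiniteDimensional ℝ E]
  [MeasurableSpace E] [BorelSpace E] [NormedAddCommGroup F] {p q t : ℝ} {f : E → F}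

theorem measurable_tangentialPoissonKernel_apply (t : ℝ) (e : E) :
    Measurable (tangentialPoissonKernel t · e) := by
  have h := measurable_poissonWeight (E := E) t
  simp only [tangentialPoissonKernel_apply]
  fun_prop

theorem memLp_mul_poissonWeight (ht : 0 < t) (hq : 1 ≤ q) :
    MemLp (fun y : E => t * poissonWeight t y) (ENNReal.ofReal q) :=
  (memLp_poissonWeight ht hq).const_mul t

theorem memLp_normalPoissonKernel (ht : 0 < t) (hq : 1 ≤ q) :
    MemLp (normalPoissonKernel t : E → ℝ) (ENNReal.ofReal q) :=
  ((memLp_poissonWeight ht hq).const_mul _).mono'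
    (measurable_normalPoissonKernel t).aestronglyMeasurable
    (.of_forall (abs_normalPoissonKernel_le ht))

theorem memLp_tangentialPoissonKernel_apply (e : E) (ht : 0 < t) (hq : 1 ≤ q) :
    MemLp (tangentialPoissonKernel t · e) (ENNReal.ofReal q) :=
  ((memLp_poissonWeight ht hq).const_mul _).mono'
    (measurable_tangentialPoissonKernel_apply t e).aestronglyMeasurable
    (.of_forall (abs_tangentialPoissonKernel_apply_le e ht))

theorem integrable_poissonWeight_mul_norm_sub (ht : 0 < t) (hp : 1 < p)
    (hf : MemLp f (ENNReal.ofReal p)) (x : E) :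
    Integrable fun y => poissonWeight t y * ‖f (x - y)‖ := by
  have hpq := Real.HolderConjugate.conjExponent hp
  exact convolutionExistsAt_of_memLp hpq (memLp_poissonWeight ht hpq.symm.lt.le) hf.norm x

theorem integrable_poissonWeight_sub_mul_norm (ht : 0 < t) (hp : 1 < p)
    (hf : MemLp f (ENNReal.ofReal p)) (x : E) :
    Integrable fun y => poissonWeight t (x - y) * ‖f y‖ := by
  simpa only [sub_sub_cancel] using
    (integrable_poissonWeight_mul_norm_sub ht hp hf x).comp_sub_left x

variable [NormedSpace ℝ F]

theorem continuousAt_convolution_of_norm_le_poissonWeight (ht : 0 < t) (hp : 1 < p)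
    (hf : MemLp f (ENNReal.ofReal p)) {φ : ℝ → E → ℝ} {K : ℝ}
    (hmeas : ∀ τ, AEStronglyMeasurable (φ τ))
    (hle : ∀ τ > 0, ∀ y, |φ τ y| ≤ K * poissonWeight τ y)
    (hcont : ∀ y, ContinuousAt (φ · y) t) (x : E) :
    ContinuousAt (fun τ => (φ τ ⋆ f) x) t := by
  have hfx := memLp_comp_const_sub hf x
  have hK : 0 ≤ K := nonneg_of_mul_nonneg_left ((abs_nonneg _).trans (hle t ht 0)) <| by
    unfold poissonWeight
    positivity
  refine continuousAt_of_dominated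
    (bound := fun y => K * (poissonWeight (t / 2) y * ‖f (x - y)‖))
    (.of_forall fun τ => (hmeas τ).smul hfx.1) ?_
    ((integrable_poissonWeight_mul_norm_sub (half_pos ht) hp hf x).const_mul K)
    (.of_forall fun y => (hcont y).smul continuousAt_const)
  filter_upwards [Ioi_mem_nhds (half_lt_self ht)] with τ (hτ : t / 2 < τ)
  refine .of_forall fun y => ?_
  rw [lsmul_apply, norm_smul, ← mul_assoc]
  gcongr
  exact (hle τ ((half_pos ht).trans hτ) y).trans
    (mul_le_mul_of_nonneg_left (poissonWeight_anti (half_pos ht) hτ.le y) hK)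

theorem continuousAt_normalPoissonKernel_convolution (ht : 0 < t) (hp : 1 < p)
    (hf : MemLp f (ENNReal.ofReal p)) (x : E) :
    ContinuousAt (fun τ => (normalPoissonKernel τ ⋆ f) x) t :=
  continuousAt_convolution_of_norm_le_poissonWeight ht hp hf
    (fun τ => (measurable_normalPoissonKernel τ).aestronglyMeasurable)
    (fun _ hτ => abs_normalPoissonKernel_le hτ) (continuousAt_normalPoissonKernel ht) x

theorem continuousAt_tangentialPoissonKernel_convolution (ht : 0 < t) (hp : 1 < p)
    (hf : MemLp f (ENNReal.ofReal p)) (e x : E) :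
    ContinuousAt (fun τ => ((tangentialPoissonKernel τ · e) ⋆ f) x) t :=
  continuousAt_convolution_of_norm_le_poissonWeight ht hp hf
    (fun τ => (measurable_tangentialPoissonKernel_apply τ e).aestronglyMeasurable)
    (fun _ hτ => abs_tangentialPoissonKernel_apply_le e hτ)
    (continuousAt_tangentialPoissonKernel_apply ht · e) x

theorem hasDerivAt_mul_poissonWeight_convolution (ht : 0 < t) (hp : 1 < p)
    (hf : MemLp f (ENNReal.ofReal p)) (x : E) :
    HasDerivAt (fun τ => ((fun y => τ * poissonWeight τ y) ⋆ f) x)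
      ((normalPoissonKernel t ⋆ f) x) t := by
  have hpq := Real.HolderConjugate.conjExponent hp
  have hfx := memLp_comp_const_sub hf x
  refine (hasDerivAt_integral_of_dominated_loc_of_deriv_le (s := Ioi (t / 2))
    (bound := fun y => (finrank ℝ E + 1) * (poissonWeight (t / 2) y * ‖f (x - y)‖))
    (F' := fun τ y => normalPoissonKernel τ y • f (x - y)) (Ioi_mem_nhds (half_lt_self ht))
    (.of_forall fun τ => ((measurable_poissonWeight τ).const_mul τ).aestronglyMeasurable.smul hfx.1)
    (convolutionExistsAt_of_memLp hpq (memLp_mul_poissonWeight ht hpq.symm.lt.le) hf x)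
    ((measurable_normalPoissonKernel t).aestronglyMeasurable.smul hfx.1) ?_
    ((integrable_poissonWeight_mul_norm_sub (half_pos ht) hp hf x).const_mul _) ?_).2
  · refine .of_forall fun y τ (hτ : t / 2 < τ) => ?_
    rw [norm_smul, ← mul_assoc]
    gcongr
    exact (abs_normalPoissonKernel_le ((half_pos ht).trans hτ) y).trans
      (by gcongr; exact poissonWeight_anti (half_pos ht) hτ.le y)
  · exact .of_forall fun y τ hτ =>
      (hasDerivAt_mul_poissonWeight ((half_pos ht).trans hτ) y).smul_const _

theorem integrable_tangentialPoissonKernel_smulRight (ht : 0 < t) (hp : 1 < p)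
    (hf : MemLp f (ENNReal.ofReal p)) (x : E) :
    Integrable fun y => (tangentialPoissonKernel t (x - y)).smulRight (f y) := by
  have hkernel : Continuous fun y => tangentialPoissonKernel t (x - y) :=
    (continuous_tangentialPoissonKernel ht).comp (continuous_const.sub continuous_id)
  have hmeas := (ContinuousLinearMap.smulRightL ℝ E F).aestronglyMeasurable_comp₂
    hkernel.aestronglyMeasurable hf.1
  refine ((integrable_poissonWeight_sub_mul_norm ht hp hf x).const_mul
    (finrank ℝ E + 1 : ℝ)).mono' hmeas (.of_forall fun y => ?_)
  rw [ContinuousLinearMap.norm_smulRight_apply, ← mul_assoc]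
  gcongr
  exact norm_tangentialPoissonKernel_le ht (x - y)

theorem hasFDerivAt_mul_poissonWeight_convolution (ht : 0 < t) (hp : 1 < p)
    (hf : MemLp f (ENNReal.ofReal p)) (x : E) :
    HasFDerivAt ((fun y => t * poissonWeight t y) ⋆ f)
      (∫ y, (tangentialPoissonKernel t (x - y)).smulRight (f y)) x := by
  have hpq := Real.HolderConjugate.conjExponent hp
  have hkernel := memLp_mul_poissonWeight (E := E) ht hpq.symm.lt.le
  have hswap : (fun y => t * poissonWeight t y) ⋆ f =
      fun z => ∫ y, (t * poissonWeight t (z - y)) • f y :=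
    funext fun z => convolution_lsmul_swap
  rw [hswap]
  refine hasFDerivAt_integral_of_dominated_of_fderiv_le (Metric.ball_mem_nhds x ht)
    (F' := fun z y => (tangentialPoissonKernel t (z - y)).smulRight (f y))
    (bound := fun y => (finrank ℝ E + 1) *
      (3 ^ ((finrank ℝ E + 1 : ℝ) / 2) * (poissonWeight t (x - y) * ‖f y‖)))
    (.of_forall fun z => hkernel.1.convolution_integrand_swap_snd (lsmul ℝ ℝ) hf.1 z)
    (convolutionExistsAt_of_memLp hpq hkernel hf x).integrable_swap
    (integrable_tangentialPoissonKernel_smulRight ht hp hf x).1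
    (.of_forall fun y z hz => ?_)
    (((integrable_poissonWeight_sub_mul_norm ht hp hf x).const_mul _).const_mul _)
    (.of_forall fun y z _ => ?_)
  · rw [ContinuousLinearMap.norm_smulRight_apply, ← mul_assoc _ (poissonWeight t _), ← mul_assoc]
    gcongr
    exact norm_tangentialPoissonKernel_le_of_mem_ball ht hz y
  · exact ((hasFDerivAt_mul_poissonWeight ht (z - y)).comp z
      ((hasFDerivAt_id z).sub_const y)).smul_const (f y)

theorem fderiv_mul_poissonWeight_convolution_apply [CompleteSpace F] (ht : 0 < t) (hp : 1 < p)
    (hf : MemLp f (ENNReal.ofReal p)) (x e : E) :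
    fderiv ℝ ((fun y => t * poissonWeight t y) ⋆ f) x e =
      ((tangentialPoissonKernel t · e) ⋆ f) x := by
  rw [(hasFDerivAt_mul_poissonWeight_convolution ht hp hf x).fderiv,
    ContinuousLinearMap.integral_apply (integrable_tangentialPoissonKernel_smulRight ht hp hf x),
    convolution_lsmul_swap]
  rfl

end PoissonConvolution

theorem eLpNorm_le_of_forall_eLpNorm_add_le {α F : Type*} [MeasurableSpace α] {μ : Measure α}
    [NormedAddCommGroup F] {r : ℝ≥0∞} {A : ℝ → α → F} {t : ℝ} {M : ℝ≥0∞}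
    (hmeas : ∀ τ, AEStronglyMeasurable (A τ) μ) (hcont : ∀ x, ContinuousAt (A · x) t)
    (hle : ∀ s > 0, eLpNorm (A (s + t)) r μ ≤ M) : eLpNorm (A t) r μ ≤ M := by
  have hseq : Tendsto (fun n : ℕ => 1 / ((n : ℝ) + 1) + t) atTop (𝓝 t) := by
    simpa only [zero_add] using tendsto_one_div_add_atTop_nhds_zero_nat.add_const t
  calc eLpNorm (A t) r μ
      ≤ liminf (fun n : ℕ => eLpNorm (A (1 / ((n : ℝ) + 1) + t)) r μ) atTop :=
        Lp.eLpNorm_lim_le_liminf_eLpNorm (fun n => hmeas _) _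
          (.of_forall fun x => (hcont x).tendsto.comp hseq)
    _ ≤ M := liminf_le_of_frequently_le'
        (Frequently.of_forall fun n => hle _ Nat.one_div_pos_of_nat)

theorem eLpNorm_le_sum_eLpNorm_apply {α ι : Type*} [MeasurableSpace α] [Fintype ι]
    {μ : Measure α} {h : α → EuclideanSpace ℝ ι} {r : ℝ≥0∞} (hr : 1 ≤ r)
    (hh : AEStronglyMeasurable h μ) :
    eLpNorm h r μ ≤ ∑ i, eLpNorm (fun a => h a i) r μ := by
  have hcoord (i : ι) : AEStronglyMeasurable (fun a => h a i) μ :=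
    (EuclideanSpace.proj i : EuclideanSpace ℝ ι →L[ℝ] ℝ).continuous.comp_aestronglyMeasurable hh
  calc eLpNorm h r μ ≤ eLpNorm (∑ i, fun a => ‖h a i‖) r μ := by
        refine eLpNorm_mono_real fun a => ?_
        rw [Finset.sum_apply, EuclideanSpace.norm_eq]
        exact Real.sqrt_le_iff.2 ⟨by positivity,
          Finset.sum_sq_le_sq_sum_of_nonneg fun i _ => norm_nonneg _⟩
    _ ≤ ∑ i, eLpNorm (fun a => ‖h a i‖) r μ := eLpNorm_sum_le (fun i _ => (hcoord i).norm) hr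
    _ = ∑ i, eLpNorm (fun a => h a i) r μ := by simp only [eLpNorm_norm]

theorem sum_convolution {G F ι : Type*} [Sub G] [MeasurableSpace G] {μ : Measure G}
    [NormedAddCommGroup F] [NormedSpace ℝ F] (s : Finset ι) {k : ι → G → ℝ} {f : G → F} {x : G}
    (hk : ∀ i, ConvolutionExistsAt (k i) f x (lsmul ℝ ℝ) μ) :
    ((∑ i ∈ s, k i) ⋆[lsmul ℝ ℝ, μ] f) x = ∑ i ∈ s, (k i ⋆[lsmul ℝ ℝ, μ] f) x := by
  simp only [convolution_def, Finset.sum_apply, lsmul_apply, Finset.sum_smul]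
  exact integral_finsetSum s fun i _ => hk i

section ConvolutionAlgebra

variable {E F : Type*} [NormedAddCommGroup E] [NormedSpace ℝ E] [FiniteDimensional ℝ E]
  [MeasureSpace E] [BorelSpace E] [(volume : Measure E).IsAddHaarMeasure]
  [NormedAddCommGroup F] [NormedSpace ℝ F] {f : E → F} {k φ : E → ℝ} {p q : ℝ}

theorem convolution_assoc_of_memLp [CompleteSpace F] (hpq : p.HolderConjugate q)
    (hk : MemLp k (ENNReal.ofReal q)) (hφ : Integrable φ) (hφp : MemLp φ (ENNReal.ofReal p))
    (hφq : MemLp φ (ENNReal.ofReal q)) (hf : MemLp f (ENNReal.ofReal p)) :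
    (k ⋆ φ) ⋆ f = k ⋆ (φ ⋆ f) := by
  ext x
  refine convolution_assoc (lsmul ℝ ℝ) (lsmul ℝ ℝ) (lsmul ℝ ℝ) (lsmul ℝ ℝ)
    (fun a b z => smul_assoc a b z) hk.1 hφ.1 hf.1
    (.of_forall (convolutionExistsAt_of_memLp hpq hk hφp))
    (.of_forall (convolutionExistsAt_of_memLp hpq hφq.norm hf.norm)) ?_
  exact convolutionExistsAt_of_memLp hpq hk.norm
    (memLp_convolution_of_integrable hpq.lt.le hφ.norm hf.norm) x

variable {ι : Type*} [Fintype ι] {C : ℝ≥0} {g : E → EuclideanSpace ℝ ι}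

theorem ConvolutionBound.eLpNorm_euclideanSpace_le (hC : ConvolutionBound k p C)
    (hpq : p.HolderConjugate q) (hk : MemLp k (ENNReal.ofReal q))
    (hg : MemLp g (ENNReal.ofReal p)) : eLpNorm (k ⋆ g) (ENNReal.ofReal p) volume ≤
      (Fintype.card ι * C) * eLpNorm g (ENNReal.ofReal p) volume := by
  have hcoord (i : ι) : MemLp (fun y => g y i) (ENNReal.ofReal p) :=
    (EuclideanSpace.proj i : EuclideanSpace ℝ ι →L[ℝ] ℝ).comp_memLp' hg
  have hconv (i : ι) (x : E) : (k ⋆ g) x i = (k ⋆ fun y => g y i) x :=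
    ((EuclideanSpace.proj i : EuclideanSpace ℝ ι →L[ℝ] ℝ).integral_comp_comm
      (convolutionExistsAt_of_memLp hpq hk hg x)).symm
  calc eLpNorm (k ⋆ g) (ENNReal.ofReal p) volume
      ≤ ∑ i, eLpNorm (k ⋆ fun y => g y i) (ENNReal.ofReal p) volume := by
        simpa only [hconv] using eLpNorm_le_sum_eLpNorm_apply (by simpa using hpq.lt.le)
          (aestronglyMeasurable_convolution hk.1 hg.1)
    _ ≤ ∑ _ : ι, C * eLpNorm g (ENNReal.ofReal p) volume := by
        refine Finset.sum_le_sum fun i _ => (hC _ (hcoord i)).trans ?_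
        gcongr
        exact eLpNorm_mono fun y => PiLp.norm_apply_le (g y) i
    _ = _ := by rw [Finset.sum_const, Finset.card_univ, nsmul_eq_mul, mul_assoc]

end ConvolutionAlgebra

section KernelIdentities

variable {E : Type*} [NormedAddCommGroup E] [InnerProductSpace ℝ E]

variable (E) in
/-- The total mass `∫ t w_t` of the unnormalized Poisson kernel, where `w_t = poissonWeight t`. -/
def poissonMass : ℝ :=
  Real.pi ^ ((finrank ℝ E + 1 : ℝ) / 2) / Real.Gamma ((finrank ℝ E + 1 : ℝ) / 2)

theorem poissonMass_ne_zero : poissonMass E ≠ 0 :=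
  div_ne_zero (Real.rpow_pos_of_pos Real.pi_pos _).ne' (Real.Gamma_pos_of_pos (by positivity)).ne'

variable [FiniteDimensional ℝ E] [MeasurableSpace E] [BorelSpace E] {p s t : ℝ}

theorem mul_poissonWeight_convolution_conjugatePoissonKernel (hs : 0 < s) (ht : 0 < t) (e : E) :
    (fun y => t * poissonWeight t y) ⋆ conjugatePoissonKernel e s =
      poissonMass E • conjugatePoissonKernel e (s + t) := by
  ext x
  have hΓ : Real.Gamma ((finrank ℝ E + 1 : ℝ) / 2) ≠ 0 :=
    (Real.Gamma_pos_of_pos (by positivity)).ne'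
  have hconv : ((fun y => t * poissonWeight t y) ⋆ conjugatePoissonKernel e s) x =
      t * (poissonWeight t ⋆ conjugatePoissonKernel e s) x :=
    congrFun (smul_convolution (y := t) (f := poissonWeight t)) x
  rw [hconv, Pi.smul_apply, smul_eq_mul, poissonMass, div_mul_eq_mul_div, eq_div_iff hΓ, mul_comm]
  exact poissonWeight_convolution_conjugatePoissonKernel hs ht e x

theorem normalPoissonKernel_convolution_conjugatePoissonKernel (hs : 0 < s) (ht : 0 < t) (e : E) :
    normalPoissonKernel t ⋆ conjugatePoissonKernel e s =
      poissonMass E • (tangentialPoissonKernel (s + t) · e) := by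
  ext x
  have hQ := memLp_conjugatePoissonKernel e hs one_lt_two
  refine (hasDerivAt_mul_poissonWeight_convolution ht one_lt_two hQ x).unique ?_
  refine HasDerivAt.congr_of_eventuallyEq (f := fun τ =>
    poissonMass E * conjugatePoissonKernel e (s + τ) x) ?_ ?_
  · exact ((hasDerivAt_conjugatePoissonKernel (add_pos hs ht) e x).comp_const_add s t).const_mul _
  · filter_upwards [Ioi_mem_nhds ht] with τ hτ
    exact congrFun (mul_poissonWeight_convolution_conjugatePoissonKernel hs hτ e) x

theorem tangentialPoissonKernel_convolution_conjugatePoissonKernel (hs : 0 < s) (ht : 0 < t)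
    (e e' : E) : (tangentialPoissonKernel t · e') ⋆ conjugatePoissonKernel e s =
      poissonMass E • (fderiv ℝ (conjugatePoissonKernel e (s + t)) · e') := by
  ext x
  have hQ := memLp_conjugatePoissonKernel e hs one_lt_two
  rw [← fderiv_mul_poissonWeight_convolution_apply ht one_lt_two hQ,
    mul_poissonWeight_convolution_conjugatePoissonKernel hs ht, fderiv_const_smul_field]
  rfl

theorem sum_tangentialPoissonKernel_convolution_conjugatePoissonKernel {ι : Type*} [Fintype ι]
    (b : OrthonormalBasis ι ℝ E) (hs : 0 < s) (ht : 0 < t) :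
    ∑ i, (tangentialPoissonKernel t · (b i)) ⋆ conjugatePoissonKernel (b i) s =
      -(poissonMass E • normalPoissonKernel (s + t)) := by
  ext x
  simp only [tangentialPoissonKernel_convolution_conjugatePoissonKernel hs ht, Finset.sum_apply,
    Pi.smul_apply, ← Finset.smul_sum, sum_fderiv_conjugatePoissonKernel b (add_pos hs ht),
    Pi.neg_apply, smul_neg]

variable {F : Type*} [NormedAddCommGroup F] [NormedSpace ℝ F] [CompleteSpace F] {f : E → F}

theorem conjugatePoissonKernel_convolution_assoc {φ : E → ℝ}
    (hφ : ∀ r : ℝ, 1 ≤ r → MemLp φ (ENNReal.ofReal r)) (hp : 1 < p)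
    (hf : MemLp f (ENNReal.ofReal p)) (hs : 0 < s) (e : E) :
    (φ ⋆ conjugatePoissonKernel e s) ⋆ f = conjugatePoissonKernel e s ⋆ (φ ⋆ f) := by
  have hpq := Real.HolderConjugate.conjExponent hp
  have hφ₁ : Integrable φ := memLp_one_iff_integrable.1 (by simpa using hφ 1 le_rfl)
  rw [convolution_real_comm φ]
  exact convolution_assoc_of_memLp hpq (memLp_conjugatePoissonKernel e hs hpq.symm.lt) hφ₁
    (hφ p hp.le) (hφ _ hpq.symm.lt.le) hf

theorem tangentialPoissonKernel_convolution_eq (hp : 1 < p) (hf : MemLp f (ENNReal.ofReal p))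
    (hs : 0 < s) (ht : 0 < t) (e : E) :
    (tangentialPoissonKernel (s + t) · e) ⋆ f =
      (poissonMass E)⁻¹ • (conjugatePoissonKernel e s ⋆ (normalPoissonKernel t ⋆ f)) := by
  rw [← conjugatePoissonKernel_convolution_assoc
      (fun _ hr => memLp_normalPoissonKernel ht hr) hp hf hs,
    normalPoissonKernel_convolution_conjugatePoissonKernel hs ht, smul_convolution,
    inv_smul_smul₀ poissonMass_ne_zero]

theorem normalPoissonKernel_convolution_eq {ι : Type*} [Fintype ι] (b : OrthonormalBasis ι ℝ E)
    (hp : 1 < p) (hf : MemLp f (ENNReal.ofReal p)) (hs : 0 < s) (ht : 0 < t) :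
    normalPoissonKernel (s + t) ⋆ f = (-(poissonMass E)⁻¹) • ∑ i,
      conjugatePoissonKernel (b i) s ⋆ ((tangentialPoissonKernel t · (b i)) ⋆ f) := by
  have hpq := Real.HolderConjugate.conjExponent hp
  have htang (i : ι) (r : ℝ) (hr : 1 ≤ r) :
      MemLp (tangentialPoissonKernel t · (b i)) (ENNReal.ofReal r) :=
    memLp_tangentialPoissonKernel_apply (b i) ht hr
  have hexists (x : E) (i : ι) : ConvolutionExistsAt
      ((tangentialPoissonKernel t · (b i)) ⋆ conjugatePoissonKernel (b i) s) f x (lsmul ℝ ℝ) :=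
    convolutionExistsAt_of_memLp hpq (memLp_convolution_of_integrable hpq.symm.lt.le
      (memLp_one_iff_integrable.1 (by simpa using htang i 1 le_rfl))
      (memLp_conjugatePoissonKernel (b i) hs hpq.symm.lt)) hf x
  have hsum := sum_tangentialPoissonKernel_convolution_conjugatePoissonKernel b hs ht
  simp only [← conjugatePoissonKernel_convolution_assoc (htang _) hp hf hs]
  ext x
  rw [Pi.smul_apply, Finset.sum_apply, ← sum_convolution _ (hexists x), hsum, ← neg_smul,
    smul_convolution, Pi.smul_apply, smul_smul, neg_mul_neg, inv_mul_cancel₀ poissonMass_ne_zero,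
    one_smul]

end KernelIdentities

section Comparison

variable {E κ : Type*} [NormedAddCommGroup E] [InnerProductSpace ℝ E] [FiniteDimensional ℝ E]
  [MeasurableSpace E] [BorelSpace E] [Fintype κ] {p : ℝ}

theorem exists_eLpNorm_conjugatePoissonKernel_convolution_le (ι : Type*) [Fintype ι] (hp : 1 < p)
    (e : E) : ∃ C : ℝ≥0, ∀ s > 0, ∀ g : E → EuclideanSpace ℝ ι, MemLp g (ENNReal.ofReal p) →
      eLpNorm (conjugatePoissonKernel e s ⋆ g) (ENNReal.ofReal p) volume ≤
        C * eLpNorm g (ENNReal.ofReal p) volume := by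
  have hpq := Real.HolderConjugate.conjExponent hp
  obtain ⟨C, hC⟩ := exists_convolutionBound_conjugatePoissonKernel hp e
  refine ⟨Fintype.card ι * C, fun s hs g hg => ?_⟩
  exact_mod_cast (hC s hs).eLpNorm_euclideanSpace_le hpq
    (memLp_conjugatePoissonKernel e hs hpq.symm.lt) hg

theorem exists_eLpNorm_tangentialPoissonKernel_convolution_le (ι : Type*) [Fintype ι] (hp : 1 < p)
    (e : E) : ∃ K : ℝ≥0, ∀ f : E → EuclideanSpace ℝ ι, MemLp f (ENNReal.ofReal p) → ∀ t > 0,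
      eLpNorm ((tangentialPoissonKernel t · e) ⋆ f) (ENNReal.ofReal p) volume ≤
        K * eLpNorm (normalPoissonKernel t ⋆ f) (ENNReal.ofReal p) volume := by
  obtain ⟨C, hC⟩ := exists_eLpNorm_conjugatePoissonKernel_convolution_le ι hp e
  refine ⟨‖(poissonMass E)⁻¹‖₊ * C, fun f hf t ht => ?_⟩
  have hnormal : MemLp (normalPoissonKernel t ⋆ f) (ENNReal.ofReal p) :=
    memLp_convolution_of_integrable hp.le (memLp_one_iff_integrable.1
      (by simpa using memLp_normalPoissonKernel (E := E) ht le_rfl)) hf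
  refine eLpNorm_le_of_forall_eLpNorm_add_le
    (A := fun τ => (tangentialPoissonKernel τ · e) ⋆ f)
    (fun τ => aestronglyMeasurable_convolution
      (measurable_tangentialPoissonKernel_apply τ e).aestronglyMeasurable hf.1)
    (continuousAt_tangentialPoissonKernel_convolution ht hp hf e) fun s hs => ?_
  rw [tangentialPoissonKernel_convolution_eq hp hf hs ht, eLpNorm_const_smul, enorm_eq_nnnorm,
    ENNReal.coe_mul, mul_assoc]
  gcongr
  exact hC s hs _ hnormal

theorem exists_eLpNorm_normalPoissonKernel_convolution_le (ι : Type*) [Fintype ι] (hp : 1 < p)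
    (b : OrthonormalBasis κ ℝ E) :
    ∃ K : ℝ≥0, ∀ f : E → EuclideanSpace ℝ ι, MemLp f (ENNReal.ofReal p) → ∀ t > 0,
      eLpNorm (normalPoissonKernel t ⋆ f) (ENNReal.ofReal p) volume ≤
        K * ∑ i, eLpNorm ((tangentialPoissonKernel t · (b i)) ⋆ f) (ENNReal.ofReal p) volume := by
  have hp₁ : 1 ≤ ENNReal.ofReal p := by simpa using hp.le
  choose C hC using fun i => exists_eLpNorm_conjugatePoissonKernel_convolution_le ι hp (b i)
  refine ⟨‖-(poissonMass E)⁻¹‖₊ * ∑ i, C i, fun f hf t ht => ?_⟩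
  have htang (i : κ) : MemLp ((tangentialPoissonKernel t · (b i)) ⋆ f) (ENNReal.ofReal p) :=
    memLp_convolution_of_integrable hp.le (memLp_one_iff_integrable.1
      (by simpa using memLp_tangentialPoissonKernel_apply (b i) ht le_rfl)) hf
  refine eLpNorm_le_of_forall_eLpNorm_add_le (A := fun τ => normalPoissonKernel τ ⋆ f)
    (fun τ => aestronglyMeasurable_convolution
      (measurable_normalPoissonKernel τ).aestronglyMeasurable hf.1)
    (continuousAt_normalPoissonKernel_convolution ht hp hf) fun s hs => ?_
  rw [normalPoissonKernel_convolution_eq b hp hf hs ht, eLpNorm_const_smul, enorm_eq_nnnorm,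
    ENNReal.coe_mul, mul_assoc]
  gcongr
  refine (eLpNorm_sum_le (fun i _ => aestronglyMeasurable_convolution
    (measurable_conjugatePoissonKernel (b i) s).aestronglyMeasurable (htang i).1)
    hp₁).trans ?_
  rw [Finset.mul_sum]
  gcongr with i
  refine (hC i s hs _ (htang i)).trans ?_
  gcongr
  exact Finset.single_le_sum_of_canonicallyOrdered (Finset.mem_univ i)

end Comparison

section PoissonInt

variable {d m : ℕ} {p t : ℝ} {f : Ed d → Ed m}

theorem poissonKernelEd_eq (d : ℕ) (t : ℝ) (y : Ed d) :
    poissonKernelEd d t y = 2 / sphereVol d * (t * poissonWeight t y) := by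
  rw [poissonKernelEd, poissonWeight, finrank_euclideanSpace_fin, Real.rpow_neg (by positivity),
    div_eq_mul_inv, mul_assoc]

theorem poissonInt_eq (f : Ed d → Ed m) (x : Ed d) (t : ℝ) :
    poissonInt d m f x t = (2 / sphereVol d) • ((fun y => t * poissonWeight t y) ⋆ f) x := by
  simp only [poissonInt, convolution, poissonKernelEd_eq, mul_smul, integral_smul, lsmul_apply]

theorem deriv_poissonInt (hp : 1 < p) (hf : MemLp f (ENNReal.ofReal p)) (ht : 0 < t) :
    (fun x => deriv (fun τ => poissonInt d m f x τ) t) =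
      (2 / sphereVol d) • (normalPoissonKernel t ⋆ f) := by
  ext1 x
  simp only [poissonInt_eq]
  exact ((hasDerivAt_mul_poissonWeight_convolution ht hp hf x).const_smul (2 / sphereVol d)).deriv

theorem fderiv_poissonInt_apply (hp : 1 < p) (hf : MemLp f (ENNReal.ofReal p)) (ht : 0 < t)
    (e : Ed d) :
    (fun x => fderiv ℝ (fun z => poissonInt d m f z t) x e) =
      (2 / sphereVol d) • ((tangentialPoissonKernel t · e) ⋆ f) := by
  ext1 x
  have hconst : (fun z => poissonInt d m f z t) =
      (2 / sphereVol d) • ((fun y => t * poissonWeight t y) ⋆ f) :=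
    funext fun z => poissonInt_eq f z t
  rw [hconst, fderiv_const_smul_field, Pi.smul_apply, _root_.smul_apply,
    fderiv_mul_poissonWeight_convolution_apply ht hp hf, Pi.smul_apply]

theorem exists_eLpNorm_fderiv_poissonInt_le (m : ℕ) (hp : 1 < p) (e : Ed d) :
    ∃ K : ℝ≥0, ∀ f : Ed d → Ed m, MemLp f (ENNReal.ofReal p) → ∀ t > 0,
      eLpNorm (fun x => fderiv ℝ (fun z => poissonInt d m f z t) x e) (ENNReal.ofReal p) volume ≤
        K * eLpNorm (fun x => deriv (fun τ => poissonInt d m f x τ) t)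
          (ENNReal.ofReal p) volume := by
  obtain ⟨K, hK⟩ := exists_eLpNorm_tangentialPoissonKernel_convolution_le (Fin m) hp e
  refine ⟨K, fun f hf t ht => ?_⟩
  rw [deriv_poissonInt hp hf ht, fderiv_poissonInt_apply hp hf ht, eLpNorm_const_smul,
    eLpNorm_const_smul, mul_left_comm]
  gcongr
  exact hK f hf t ht

theorem exists_eLpNorm_deriv_poissonInt_le (d m : ℕ) (hp : 1 < p) :
    ∃ K : ℝ≥0, ∀ f : Ed d → Ed m, MemLp f (ENNReal.ofReal p) → ∀ t > 0,
      eLpNorm (fun x => deriv (fun τ => poissonInt d m f x τ) t) (ENNReal.ofReal p) volume ≤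
        K * ∑ j, eLpNorm (fun x => fderiv ℝ (fun z => poissonInt d m f z t) x
          (EuclideanSpace.single j 1)) (ENNReal.ofReal p) volume := by
  obtain ⟨K, hK⟩ := exists_eLpNorm_normalPoissonKernel_convolution_le (Fin m) hp
    (EuclideanSpace.basisFun (Fin d) ℝ)
  refine ⟨K, fun f hf t ht => ?_⟩
  simp only [deriv_poissonInt hp hf ht, fderiv_poissonInt_apply hp hf ht, eLpNorm_const_smul,
    ← Finset.mul_sum]
  rw [mul_left_comm]
  gcongr
  simpa only [EuclideanSpace.basisFun_apply] using hK f hf t ht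

end PoissonInt

theorem poisson_integral_derivative_comparison_general (d m : ℕ) (p : ℝ) (hp : 1 < p) :
    ∃ c₁ c₂ : ℝ, 0 < c₁ ∧ 0 < c₂ ∧
      ∀ f : Ed d → Ed m, MemLp f (ENNReal.ofReal p) volume →
        ∀ t : ℝ, 0 < t →
          ENNReal.ofReal c₁ *
              eLpNorm (fun x => deriv (fun τ => poissonInt d m f x τ) t)
                (ENNReal.ofReal p) volume ≤
            (∑ j : Fin d,
              eLpNorm (fun x => fderiv ℝ (fun z => poissonInt d m f z t) x
                  (EuclideanSpace.single j 1))
                (ENNReal.ofReal p) volume) ∧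
          (∑ j : Fin d,
              eLpNorm (fun x => fderiv ℝ (fun z => poissonInt d m f z t) x
                  (EuclideanSpace.single j 1))
                (ENNReal.ofReal p) volume) ≤
            ENNReal.ofReal c₂ *
              eLpNorm (fun x => deriv (fun τ => poissonInt d m f x τ) t)
                (ENNReal.ofReal p) volume := by
  obtain ⟨A, hA⟩ := exists_eLpNorm_deriv_poissonInt_le d m hp
  choose B hB using fun j : Fin d =>
    exists_eLpNorm_fderiv_poissonInt_le m hp (EuclideanSpace.single j 1)
  refine ⟨((A + 1 : ℝ≥0) : ℝ)⁻¹, ((∑ j, B j + 1 : ℝ≥0) : ℝ), by positivity, by positivity,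
    fun f hf t ht => ⟨?_, ?_⟩⟩
  · rw [ENNReal.ofReal_inv_of_pos (by positivity), ENNReal.ofReal_coe_nnreal,
      ENNReal.inv_mul_le_iff (by simp) ENNReal.coe_ne_top]
    exact (hA f hf t ht).trans (by gcongr; exact le_self_add)
  · rw [ENNReal.ofReal_coe_nnreal]
    refine (Finset.sum_le_sum fun j _ => hB j f hf t ht).trans ?_
    rw [← Finset.sum_mul]
    push_cast
    gcongr
    exact le_self_add

/-- Comparability of the normal and tangential derivatives of the Poisson integral:
for `1 < p < ∞` and `f ∈ L^p(ℝ^d;ℝ^d)` with Poisson integral `u`, there are constants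
`c₁, c₂ > 0` depending only on `d` and `p` such that for every `t > 0`,
`c₁ ‖∂_t u(·,t)‖_{L^p} ≤ Σ_j ‖∂_{x_j} u(·,t)‖_{L^p} ≤ c₂ ‖∂_t u(·,t)‖_{L^p}`. -/
theorem poisson_integral_derivative_comparison (d : ℕ) (p : ℝ) (hp : 1 < p) :
    ∃ c₁ c₂ : ℝ, 0 < c₁ ∧ 0 < c₂ ∧
      ∀ f : Ed d → Ed d, MemLp f (ENNReal.ofReal p) volume →
        ∀ t : ℝ, 0 < t →
          ENNReal.ofReal c₁ *
              eLpNorm (fun x => deriv (fun τ => poissonInt d d f x τ) t)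
                (ENNReal.ofReal p) volume ≤
            (∑ j : Fin d,
              eLpNorm (fun x => fderiv ℝ (fun z => poissonInt d d f z t) x
                  (EuclideanSpace.single j 1))
                (ENNReal.ofReal p) volume) ∧
          (∑ j : Fin d,
              eLpNorm (fun x => fderiv ℝ (fun z => poissonInt d d f z t) x
                  (EuclideanSpace.single j 1))
                (ENNReal.ofReal p) volume) ≤
            ENNReal.ofReal c₂ *
              eLpNorm (fun x => deriv (fun τ => poissonInt d d f x τ) t)
                (ENNReal.ofReal p) volume :=
  poisson_integral_derivative_comparison_general d d p hp
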